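/- arXiv:2502.06169 — 10 statements merged into one kernel-verified Lean document; each statement's English description precedes it below -/
import Mathlib

section
/- Let A = (a_ij) be a 3×3 generalized Cartan matrix whose principal 2×2 submatrix A₁₂ is of infinite type, i.e. a₁₂·a₂₁ ≥ 4. Then ℚ[ω₁,ω₂,ω₃] = P₁ + P₂ as ℚ-vector spaces; that is, every polynomial in ℚ[ω₁,ω₂,ω₃] is the sum of a polynomial fixed by σ₁ and a polynomial fixed by σ₂. -/
open MvPolynomial

/-- `A` is a (generalized) Cartan matrix. -/
def IsGCM {n : ℕ} (A : Matrix (Fin n) (Fin n) ℤ) : Prop :=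
  (∀ i, A i i = 2) ∧ (∀ i j, i ≠ j → A i j ≤ 0) ∧
    (∀ i j, i ≠ j → (A i j = 0 ↔ A j i = 0))

/-- The simple root `α_j = a₁ⱼω₁ + a₂ⱼω₂ + a₃ⱼω₃` viewed in `F[ω₁,ω₂,ω₃]`. -/
noncomputable def cartanAlpha (A : Matrix (Fin 3) (Fin 3) ℤ) (F : Type*) [Field F]
    (j : Fin 3) : MvPolynomial (Fin 3) F :=
  ∑ i : Fin 3, (C ((A i j : ℤ) : F)) * X i

/-- The simple reflection `σ_j`, the `F`-algebra endomorphism of `F[ω₁,ω₂,ω₃]`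
determined by `σ_j(ω_j) = ω_j − α_j` and `σ_j(ω_i) = ω_i` for `i ≠ j`. -/
noncomputable def cartanSigma (A : Matrix (Fin 3) (Fin 3) ℤ) (F : Type*) [Field F]
    (j : Fin 3) : MvPolynomial (Fin 3) F →ₐ[F] MvPolynomial (Fin 3) F :=
  aeval (fun i => if i = j then X j - cartanAlpha A F j else X i)

theorem tridiag_mem {W : Type*} [AddCommGroup W] [Module ℚ W] (U : Submodule ℚ W)
    (a b : ℚ) (hab : 4 ≤ a * b) (d : ℕ) (m : ℕ → W) (h0 : m 0 ∈ U) (hd : m d ∈ U)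
    (hrec : ∀ i, i + 2 ≤ d → a • m (i + 2) + (a * b) • m (i + 1) + b • m i ∈ U) :
    ∀ i, i ≤ d → m i ∈ U := by
  have key : ∀ i, i + 1 ≤ d → ∃ s : ℚ, 0 ≤ s ∧ s ≤ 1 / 2 ∧ m i + (a * s) • m (i + 1) ∈ U := by
    intro i
    induction i with
    | zero => intro _; exact ⟨0, by norm_num, by norm_num, by simpa using h0⟩
    | succ i ih =>
      intro hi
      obtain ⟨s, hs0, hs1, hs⟩ := ih (by omega)
      have hpos : 2 ≤ a * b * (1 - s) := by nlinarith
      have hne : a * b * (1 - s) ≠ 0 := by linarith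
      refine ⟨1 / (a * b * (1 - s)), by positivity, ?_, ?_⟩
      · rw [div_le_div_iff₀ (by linarith) (by norm_num)]; linarith
      · have h1 := U.sub_mem (hrec i (by omega)) (U.smul_mem b hs)
        have h2 := U.smul_mem (1 / (a * b * (1 - s))) h1
        have : m (i + 1) + (a * (1 / (a * b * (1 - s)))) • m (i + 1 + 1) =
            (1 / (a * b * (1 - s))) • (a • m (i + 2) + (a * b) • m (i + 1) + b • m i
              - b • (m i + (a * s) • m (i + 1))) := by
          have h3 : (1 / (a * b * (1 - s))) * (a * b * (1 - s)) = 1 := by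
            rw [one_div]; exact inv_mul_cancel₀ hne
          generalize 1 / (a * b * (1 - s)) = t at h3 ⊢
          have : m (i + 1) = (t * (a * b * (1 - s))) • m (i + 1) := by rw [h3, one_smul]
          nth_rewrite 1 [this]
          module
        rw [this]; exact h2
  intro i hi
  induction hi using Nat.decreasingInduction with
  | self => exact hd
  | of_succ i hi ih =>
    obtain ⟨s, _, _, hs⟩ := key i hi
    have := U.sub_mem hs (U.smul_mem (a * s) ih)
    simpa using this

/-- If `A` is a 3×3 generalized Cartan matrix with `a₁₂ a₂₁ ≥ 4`, then
`ℚ[ω₁,ω₂,ω₃] = P₁ + P₂`: every polynomial is a sum of a `σ₁`-invariant polynomial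
and a `σ₂`-invariant polynomial. -/
theorem rational_P_eq_P1_add_P2 (A : Matrix (Fin 3) (Fin 3) ℤ) (hA : IsGCM A)
    (hinf : 4 ≤ A 0 1 * A 1 0) :
    ∀ p : MvPolynomial (Fin 3) ℚ, ∃ p₁ p₂ : MvPolynomial (Fin 3) ℚ,
      cartanSigma A ℚ 0 p₁ = p₁ ∧ cartanSigma A ℚ 1 p₂ = p₂ ∧ p = p₁ + p₂ := by
  obtain ⟨hdiag, hneg, -⟩ := hA
  have ha : ((A 0 1 : ℤ) : ℚ) < 0 := by
    have h1 := hneg 0 1 (by decide)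
    have : A 0 1 ≠ 0 := by intro h; rw [h] at hinf; simp at hinf
    exact_mod_cast lt_of_le_of_ne h1 this
  have hab : 4 ≤ ((A 0 1 : ℤ) : ℚ) * ((A 1 0 : ℤ) : ℚ) := by exact_mod_cast hinf
  have s00 : cartanSigma A ℚ 0 (X 0) = - X 0 - C ((A 1 0 : ℤ) : ℚ) * X 1
      - C ((A 2 0 : ℤ) : ℚ) * X 2 := by
    simp only [cartanSigma, cartanAlpha, aeval_X, Fin.sum_univ_three, hdiag, if_true]
    have : C (((2 : ℤ) : ℚ)) = (2 : MvPolynomial (Fin 3) ℚ) := map_ofNat C 2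
    rw [this]; ring
  have s01 : cartanSigma A ℚ 0 (X 1) = X 1 := by simp [cartanSigma]
  have s02 : cartanSigma A ℚ 0 (X 2) = X 2 := by simp [cartanSigma]
  have s11 : cartanSigma A ℚ 1 (X 1) = - X 1 - C ((A 0 1 : ℤ) : ℚ) * X 0
      - C ((A 2 1 : ℤ) : ℚ) * X 2 := by
    simp only [cartanSigma, cartanAlpha, aeval_X, Fin.sum_univ_three, hdiag, if_true]
    have : C (((2 : ℤ) : ℚ)) = (2 : MvPolynomial (Fin 3) ℚ) := map_ofNat C 2
    rw [this]; ring
  have s10 : cartanSigma A ℚ 1 (X 0) = X 0 := by simp [cartanSigma]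
  have s12 : cartanSigma A ℚ 1 (X 2) = X 2 := by simp [cartanSigma]
  generalize cartanSigma A ℚ 0 = S at *
  generalize cartanSigma A ℚ 1 = T at *
  generalize ((A 0 1 : ℤ) : ℚ) = a at *
  generalize ((A 1 0 : ℤ) : ℚ) = b at *
  generalize ((A 2 0 : ℤ) : ℚ) = e at *
  generalize ((A 2 1 : ℤ) : ℚ) = f at *
  have SC : ∀ c : ℚ, S (C c) = C c := fun c => algHom_C S c
  have TC : ∀ c : ℚ, T (C c) = C c := fun c => algHom_C T c
  -- the subspace `P₁ + P₂`
  let U : Submodule ℚ (MvPolynomial (Fin 3) ℚ) :=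
    { carrier := {p | ∃ p₁ p₂, S p₁ = p₁ ∧ T p₂ = p₂ ∧ p = p₁ + p₂}
      zero_mem' := ⟨0, 0, by simp, by simp, by simp⟩
      add_mem' := by
        rintro _ _ ⟨p₁, p₂, h1, h2, rfl⟩ ⟨q₁, q₂, h3, h4, rfl⟩
        exact ⟨p₁ + q₁, p₂ + q₂, by rw [map_add, h1, h3], by rw [map_add, h2, h4], by ring⟩
      smul_mem' := by
        rintro c _ ⟨p₁, p₂, h1, h2, rfl⟩
        exact ⟨c • p₁, c • p₂, by rw [map_smul, h1], by rw [map_smul, h2], by rw [smul_add]⟩ }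
  have U1 : ∀ p, S p = p → p ∈ U := fun p hp => ⟨p, 0, hp, by simp, by simp⟩
  have U2 : ∀ p, T p = p → p ∈ U := fun p hp => ⟨0, p, by simp, hp, by simp⟩
  have Umul : ∀ r p, S r = r → T r = r → p ∈ U → r * p ∈ U := by
    rintro r _ h1 h2 ⟨p₁, p₂, h3, h4, rfl⟩
    exact ⟨r * p₁, r * p₂, by rw [map_mul, h1, h3], by rw [map_mul, h2, h4], by ring⟩
  -- the invariant quadratic form
  let q : MvPolynomial (Fin 3) ℚ := C a * X 0 ^ 2 + C a * C b * X 0 * X 1 + C b * X 1 ^ 2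
    + C a * C e * X 0 * X 2 + C b * C f * X 1 * X 2
  have Sq : S q = q := by
    simp only [q, map_add, map_mul, map_pow, SC, s00, s01, s02]; ring
  have Tq : T q = q := by
    simp only [q, map_add, map_mul, map_pow, TC, s10, s11, s12]; ring
  have main : ∀ d i k : ℕ, i ≤ d → (X 0 ^ i * X 1 ^ (d - i) * X 2 ^ k) ∈ U := by
    intro d
    induction d using Nat.strong_induction_on with
    | _ d ih =>
      intro i k
      refine tridiag_mem U a b hab d (fun i => X 0 ^ i * X 1 ^ (d - i) * X 2 ^ k) ?_ ?_ ?_ i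
      · apply U1; simp [s01, s02]
      · apply U2; simp [s10, s12]
      · intro i hi
        obtain ⟨j, rfl⟩ := Nat.exists_eq_add_of_le hi
        have h1 := Umul q _ Sq Tq (ih (i + j) (by omega) i k (by omega))
        have h2 := ih (i + j + 1) (by omega) (i + 1) (k + 1) (by omega)
        have h3 := ih (i + j + 1) (by omega) i (k + 1) (by omega)
        have h4 := U.sub_mem (U.sub_mem h1 (U.smul_mem (a * e) h2)) (U.smul_mem (b * f) h3)
        rw [show i + j - i = j by omega, show i + j + 1 - (i + 1) = j by omega,
          show i + j + 1 - i = j + 1 by omega] at h4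
        simp only [show i + 2 + j - (i + 2) = j by omega,
          show i + 2 + j - (i + 1) = j + 1 by omega, show i + 2 + j - i = j + 2 by omega]
        convert h4 using 1
        simp only [q, smul_eq_C_mul, C_mul]
        ring
  intro p
  change p ∈ U
  induction p using MvPolynomial.induction_on' with
  | monomial u c =>
    have h := U.smul_mem c (main (u 0 + u 1) (u 0) (u 2) (by omega))
    rw [show u 0 + u 1 - u 0 = u 1 by omega] at h
    convert h using 1
    rw [monomial_eq, smul_eq_C_mul, Finsupp.prod_fintype _ _ (by simp), Fin.prod_univ_three]
  | add p q hp hq => exact U.add_mem hp hq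
end

section
/- Let p be any prime and let A = (a_ij) be a 3×3 generalized Cartan matrix with a₁₂·a₂₁ ≥ 4. Then in F_p[ω₁,ω₂,ω₃] (coefficients reduced mod p), the sum of the F_p-subalgebra generated by {ω₁(ω₁−α₁), ω₂, ω₃} and the F_p-subalgebra generated by {ω₁, ω₂(ω₂−α₂), ω₃} is a proper subset of F_p[ω₁,ω₂,ω₃]. -/
open MvPolynomial

/-- Evaluation at the point `(x, y, 0)`. -/
noncomputable def evPt (p : ℕ) [Fact p.Prime] (v : GaloisField p 2 × GaloisField p 2) :
    MvPolynomial (Fin 3) (ZMod p) →ₐ[ZMod p] GaloisField p 2 :=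
  aeval ![v.1, v.2, 0]

/-- The semi-invariant weight `x^p y - x y^p`. -/
noncomputable def wt (p : ℕ) [Fact p.Prime] (v : GaloisField p 2 × GaloisField p 2) :
    GaloisField p 2 := v.1 ^ p * v.2 - v.1 * v.2 ^ p

lemma sum_kill (p : ℕ) [Fact p.Prime] [Fintype (GaloisField p 2)]
    (s : GaloisField p 2 × GaloisField p 2 → GaloisField p 2 × GaloisField p 2)
    (hs : ∀ v, s (s v) = v) (hw : ∀ v, wt p (s v) = - wt p v)
    (hfix : ∀ v, s v = v → wt p v = 0)
    (S : Set (MvPolynomial (Fin 3) (ZMod p)))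
    (hS : ∀ g ∈ S, ∀ v, evPt p (s v) g = evPt p v g)
    (q : MvPolynomial (Fin 3) (ZMod p)) (hq : q ∈ Algebra.adjoin (ZMod p) S) :
    ∑ v, wt p v * evPt p v q = 0 := by
  have inv : ∀ v, evPt p (s v) q = evPt p v q := by
    intro v
    induction hq using Algebra.adjoin_induction with
    | mem x hx => exact hS x hx v
    | algebraMap r => simp
    | add x y _ _ hx hy => simp [hx, hy]
    | mul x y _ _ hx hy => simp [hx, hy]
  refine Finset.sum_involution (fun v _ => s v) ?_ ?_ ?_ ?_
  · intro v _
    rw [inv, hw]; ring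
  · intro v _ hne h
    exact hne (by rw [hfix v h, zero_mul])
  · intro v _; exact Finset.mem_univ _
  · intro v _; exact hs v

lemma cast_pow_p (p : ℕ) [Fact p.Prime] (b : ℤ) :
    ((b : GaloisField p 2)) ^ p = b := by
  have := map_intCast (frobenius (GaloisField p 2) p) b
  rwa [frobenius_def] at this

lemma refl_pow (p : ℕ) [Fact p.Prime] (b : ℤ) (x y : GaloisField p 2) :
    (-x - b * y) ^ p = - x ^ p - b * y ^ p := by
  have h := map_sub (frobenius (GaloisField p 2) p) (-x) (b * y)
  rw [map_neg, map_mul] at h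
  simp only [frobenius_def, cast_pow_p] at h
  exact h

lemma sum_top (p : ℕ) [Fact p.Prime] [Fintype (GaloisField p 2)] :
    ∑ v, wt p v * evPt p v (X 0 ^ (p ^ 2 - 1 - p) * X 1 ^ (p ^ 2 - 2)) ≠ 0 := by
  have hp : 2 ≤ p := (Fact.out : p.Prime).two_le
  have hpp : 2 * p ≤ p ^ 2 := by nlinarith
  have hcard : Fintype.card (GaloisField p 2) = p ^ 2 := by
    rw [← Nat.card_eq_fintype_card]; exact GaloisField.card p 2 two_ne_zero
  have h1 : ∀ v : GaloisField p 2 × GaloisField p 2,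
      wt p v * evPt p v (X 0 ^ (p ^ 2 - 1 - p) * X 1 ^ (p ^ 2 - 2)) =
      v.1 ^ (p ^ 2 - 1) * v.2 ^ (p ^ 2 - 1) - v.1 ^ (p ^ 2 - p) * v.2 ^ (p ^ 2 + p - 2) := by
    intro v
    have e1 : p ^ 2 - 1 = p + (p ^ 2 - 1 - p) := by omega
    have e2 : p ^ 2 - 1 = 1 + (p ^ 2 - 2) := by omega
    have e3 : p ^ 2 - p = 1 + (p ^ 2 - 1 - p) := by omega
    have e4 : p ^ 2 + p - 2 = p + (p ^ 2 - 2) := by omega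
    have f1 : v.1 ^ (p ^ 2 - 1) = v.1 ^ p * v.1 ^ (p ^ 2 - 1 - p) := by rw [← pow_add, ← e1]
    have f2 : v.2 ^ (p ^ 2 - 1) = v.2 * v.2 ^ (p ^ 2 - 2) := by rw [← pow_succ', add_comm, ← e2]
    have f3 : v.1 ^ (p ^ 2 - p) = v.1 * v.1 ^ (p ^ 2 - 1 - p) := by
      rw [← pow_succ', add_comm, ← e3]
    have f4 : v.2 ^ (p ^ 2 + p - 2) = v.2 ^ p * v.2 ^ (p ^ 2 - 2) := by rw [← pow_add, ← e4]
    rw [f1, f2, f3, f4]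
    simp [wt, evPt]
    ring
  have hz : ∑ x : GaloisField p 2, x ^ (p ^ 2 - p) = 0 := by
    apply FiniteField.sum_pow_lt_card_sub_one
    rw [hcard]; omega
  have ho : ∑ x : GaloisField p 2, x ^ (p ^ 2 - 1) = -1 := by
    classical
    have : ∀ x : GaloisField p 2, x ^ (p ^ 2 - 1) = 1 - if x = 0 then 1 else 0 := by
      intro x
      split_ifs with h
      · rw [h, zero_pow (by omega)]; ring
      · rw [← hcard, FiniteField.pow_card_sub_one_eq_one x h]; ring
    simp only [this, Finset.sum_sub_distrib]
    simp [hcard]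
  rw [Finset.sum_congr rfl (fun v _ => h1 v), Finset.sum_sub_distrib, Fintype.sum_prod_type,
    Fintype.sum_prod_type]
  simp only [← Finset.mul_sum, ← Finset.sum_mul]
  rw [hz, ho]
  simp

section dual
variable (ψ : MvPolynomial (Fin 3) (ZMod 2) →ₐ[ZMod 2] Polynomial (DualNumber (ZMod 2)))
  (S : Set (MvPolynomial (Fin 3) (ZMod 2)))

lemma dual_one (hS : ∀ g ∈ S, ∀ k, ((ψ g).coeff k).snd = 0)
    (q : MvPolynomial (Fin 3) (ZMod 2)) (hq : q ∈ Algebra.adjoin (ZMod 2) S) :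
    ∀ k, ((ψ q).coeff k).snd = 0 := by
  induction hq using Algebra.adjoin_induction with
  | mem x hx => exact hS x hx
  | algebraMap r =>
    intro k
    rw [AlgHom.commutes, Polynomial.algebraMap_apply, Polynomial.coeff_C]
    split_ifs <;> simp [TrivSqZeroExt.algebraMap_eq_inl]
  | add x y _ _ hx hy => intro k; simp [hx, hy]
  | mul x y _ _ hx hy =>
    intro k
    simp [Polynomial.coeff_mul, TrivSqZeroExt.snd_sum, hx, hy]

def DCond (a : ZMod 2) (f : Polynomial (DualNumber (ZMod 2))) : Prop :=
  (f.coeff 1).fst = 0 ∧ (f.coeff 3).fst = 0 ∧ (f.coeff 3).snd = 0 ∧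
    (f.coeff 1).snd = a * (f.coeff 2).fst

lemma dual_two (a : ZMod 2) (hS : ∀ g ∈ S, DCond a (ψ g))
    (q : MvPolynomial (Fin 3) (ZMod 2)) (hq : q ∈ Algebra.adjoin (ZMod 2) S) :
    DCond a (ψ q) := by
  induction hq using Algebra.adjoin_induction with
  | mem x hx => exact hS x hx
  | algebraMap r =>
    rw [AlgHom.commutes, Polynomial.algebraMap_apply]
    simp [DCond, Polynomial.coeff_C]
  | add x y _ _ hx hy =>
    obtain ⟨h1, h2, h3, h4⟩ := hx
    obtain ⟨k1, k2, k3, k4⟩ := hy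
    refine ⟨?_, ?_, ?_, ?_⟩ <;> simp [*]
    ring
  | mul x y _ _ hx hy =>
    obtain ⟨h1, h2, h3, h4⟩ := hx
    obtain ⟨k1, k2, k3, k4⟩ := hy
    have a1 : Finset.HasAntidiagonal.antidiagonal 1 = {(0, 1), (1, 0)} := rfl
    have a2 : Finset.HasAntidiagonal.antidiagonal 2 = {(0, 2), (1, 1), (2, 0)} := rfl
    have a3 : Finset.HasAntidiagonal.antidiagonal 3 = {(0, 3), (1, 2), (2, 1), (3, 0)} := rfl
    have two : (2 : ZMod 2) = 0 := rfl
    refine ⟨?_, ?_, ?_, ?_⟩ <;> simp [Polynomial.coeff_mul, a1, a2, a3, *]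
    · linear_combination (a * ((ψ x).coeff 2).fst * ((ψ y).coeff 2).fst) * two
    · ring

end dual

lemma dual_main (i j : Fin 3) (hij : i ≠ j) (h2i : (2 : Fin 3) ≠ i) (h2j : (2 : Fin 3) ≠ j)
    (a c d : ZMod 2) (S T : Set (MvPolynomial (Fin 3) (ZMod 2)))
    (hS : S = {- (X i * (X i + C c * X 2)), X j, X 2})
    (hT : T = {X i, - (X j * (X j + C a * X i + C d * X 2)), X 2})
    (q₁ q₂ : MvPolynomial (Fin 3) (ZMod 2)) (h1 : q₁ ∈ Algebra.adjoin (ZMod 2) S)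
    (h2 : q₂ ∈ Algebra.adjoin (ZMod 2) T) (h : X i * X j ^ 3 = q₁ + q₂) : False := by
  let ψ : MvPolynomial (Fin 3) (ZMod 2) →ₐ[ZMod 2] Polynomial (DualNumber (ZMod 2)) :=
    aeval (R := ZMod 2) (S₁ := Polynomial (DualNumber (ZMod 2))) (fun k => if k = i then Polynomial.C DualNumber.eps else
      if k = j then Polynomial.X else 0)
  have ψi : ψ (X i) = Polynomial.C DualNumber.eps := by simp [ψ]
  have ψj : ψ (X j) = Polynomial.X := by simp [ψ, hij.symm]
  have ψ2 : ψ (X 2) = 0 := by simp [ψ, h2i, h2j]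
  have ψC : ∀ r, ψ (C r) = Polynomial.C (TrivSqZeroExt.inl r) := by
    intro r
    have := ψ.commutes r
    rw [Polynomial.algebraMap_apply] at this
    exact this
  have A1 := dual_one ψ S (by
    subst hS
    rintro g (rfl | rfl | rfl) k
    · rw [map_neg, map_mul, map_add, map_mul, ψi, ψ2, mul_zero, add_zero, ← Polynomial.C_mul]
      simp
    · rw [ψj, Polynomial.coeff_X]; split_ifs <;> simp
    · rw [ψ2]; simp) q₁ h1 3
  have A2 := dual_two ψ T a (by
    subst hT
    rintro g (rfl | rfl | rfl)
    · rw [ψi]; simp [DCond, Polynomial.coeff_C]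
    · have : ψ (-(X j * (X j + C a * X i + C d * X 2))) =
          - (Polynomial.X ^ 2 + Polynomial.C (TrivSqZeroExt.inl a * DualNumber.eps) *
            Polynomial.X) := by
        simp only [map_neg, map_mul, map_add, ψi, ψj, ψ2, ψC]; ring
      rw [this]
      simp [DCond, Polynomial.coeff_X, Polynomial.coeff_X_pow]
    · rw [ψ2]; simp [DCond]) q₂ h2
  have A3 := congrArg (fun f => ((ψ f).coeff 3).snd) h
  simp only [map_mul, map_pow, map_add, ψi, ψj, Polynomial.coeff_add, TrivSqZeroExt.snd_add, A1,
    A2.2.2.1] at A3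
  simp [Polynomial.coeff_X_pow] at A3

lemma wt_eq_zero (p : ℕ) [Fact p.Prime] (b : ℤ) (hb : (2 : GaloisField p 2) ≠ 0 ∨ (b : ZMod p) ≠ 0)
    (x y : GaloisField p 2) (h : -x - b * y = x) : x ^ p * y - x * y ^ p = 0 := by
  have hp : p ≠ 0 := (Fact.out : p.Prime).ne_zero
  have h' := refl_pow p b x y
  rw [h] at h'
  by_cases h2 : (2 : GaloisField p 2) = 0
  · have hb' : (b : GaloisField p 2) ≠ 0 := by
      have hb := hb.resolve_left (by simpa using h2)
      intro h0
      apply hb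
      apply (algebraMap (ZMod p) (GaloisField p 2)).injective
      simpa using h0
    have : (b : GaloisField p 2) * y = 0 := by linear_combination -h - x * h2
    have hy : y = 0 := (mul_eq_zero.mp this).resolve_left hb'
    simp [hy, hp]
  · have : (2 : GaloisField p 2) * (x ^ p * y - x * y ^ p) = 0 := by
      linear_combination y * h' + y ^ p * h
    exact (mul_eq_zero.mp this).resolve_left h2

/-- Let `p` be a prime and `A` a 3×3 generalized Cartan matrix with `a₁₂ a₂₁ ≥ 4`.
In `𝔽_p[ω₁,ω₂,ω₃]`, the sum of the subalgebra generated by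
`{ω₁(ω₁−α₁), ω₂, ω₃}` and the subalgebra generated by `{ω₁, ω₂(ω₂−α₂), ω₃}` is a
proper subset of `𝔽_p[ω₁,ω₂,ω₃]`. -/
theorem modp_P_ne_P1_add_P2 (p : ℕ) [Fact p.Prime]
    (A : Matrix (Fin 3) (Fin 3) ℤ) (hA : IsGCM A)
    (hinf : 4 ≤ A 0 1 * A 1 0) :
    ¬ (∀ q : MvPolynomial (Fin 3) (ZMod p),
        ∃ q₁ ∈ Algebra.adjoin (ZMod p)
            {X 0 * (X 0 - cartanAlpha A (ZMod p) 0), X 1, X 2},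
          ∃ q₂ ∈ Algebra.adjoin (ZMod p)
            {X 0, X 1 * (X 1 - cartanAlpha A (ZMod p) 1), X 2},
          q = q₁ + q₂) := by
  intro H
  have g0 : X 0 * (X 0 - cartanAlpha A (ZMod p) 0) =
      - (X 0 * (X 0 + C ((A 1 0 : ℤ) : ZMod p) * X 1 + C ((A 2 0 : ℤ) : ZMod p) * X 2)) := by
    have : (C (2 : ZMod p) : MvPolynomial (Fin 3) (ZMod p)) = 2 := map_ofNat C 2
    simp only [cartanAlpha, Fin.sum_univ_three, hA.1 0, Int.cast_ofNat, this]
    ring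
  have g1 : X 1 * (X 1 - cartanAlpha A (ZMod p) 1) =
      - (X 1 * (X 1 + C ((A 0 1 : ℤ) : ZMod p) * X 0 + C ((A 2 1 : ℤ) : ZMod p) * X 2)) := by
    have : (C (2 : ZMod p) : MvPolynomial (Fin 3) (ZMod p)) = 2 := map_ofNat C 2
    simp only [cartanAlpha, Fin.sum_univ_three, hA.1 1, Int.cast_ofNat, this]
    ring
  rw [g0, g1] at H
  by_cases hb : (2 : GaloisField p 2) ≠ 0 ∨ ((A 1 0 : ℤ) : ZMod p) ≠ 0
  swap
  · push Not at hb
    obtain ⟨h2, hb⟩ := hb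
    have hp2 : p = 2 := by
      have : ((2 : ℕ) : GaloisField p 2) = 0 := by exact_mod_cast h2
      rw [CharP.cast_eq_zero_iff (GaloisField p 2) p] at this
      exact (Nat.prime_dvd_prime_iff_eq Fact.out Nat.prime_two).mp this
    subst hp2
    obtain ⟨q₁, h1, q₂, h2, h⟩ := H (X 0 * X 1 ^ 3)
    rw [hb, C_0, zero_mul, add_zero] at h1
    exact dual_main 0 1 (by decide) (by decide) (by decide) _ _ _ _ _ rfl rfl q₁ q₂ h1 h2 h
  by_cases ha : (2 : GaloisField p 2) ≠ 0 ∨ ((A 0 1 : ℤ) : ZMod p) ≠ 0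
  swap
  · push Not at ha
    obtain ⟨h2, ha⟩ := ha
    have hp2 : p = 2 := by
      have : ((2 : ℕ) : GaloisField p 2) = 0 := by exact_mod_cast h2
      rw [CharP.cast_eq_zero_iff (GaloisField p 2) p] at this
      exact (Nat.prime_dvd_prime_iff_eq Fact.out Nat.prime_two).mp this
    subst hp2
    obtain ⟨q₁, h1, q₂, h2, h⟩ := H (X 1 * X 0 ^ 3)
    rw [ha, C_0, zero_mul, add_zero] at h2
    rw [add_comm] at h
    exact dual_main 1 0 (by decide) (by decide) (by decide) _ _ _ _ _
      (Set.insert_comm _ _ _) (Set.insert_comm _ _ _) q₂ q₁ h2 h1 h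
  have : Fintype (GaloisField p 2) := Fintype.ofFinite _
  obtain ⟨q₁, h1, q₂, h2, h⟩ := H (X 0 ^ (p ^ 2 - 1 - p) * X 1 ^ (p ^ 2 - 2))
  apply sum_top p
  rw [h]
  simp only [map_add, mul_add, Finset.sum_add_distrib]
  rw [sum_kill p (fun v => (-v.1 - (A 1 0 : ℤ) * v.2, v.2)) ?_ ?_ ?_ _ ?_ q₁ h1,
    sum_kill p (fun v => (v.1, -v.2 - (A 0 1 : ℤ) * v.1)) ?_ ?_ ?_ _ ?_ q₂ h2, add_zero]
  · rintro ⟨x, y⟩; ext <;> simp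
  · rintro ⟨x, y⟩
    simp only [wt, refl_pow]; ring
  · rintro ⟨x, y⟩ h
    have := wt_eq_zero p _ ha y x (congrArg Prod.snd h)
    simp only [wt]; linear_combination -this
  · rintro g (rfl | rfl | rfl) ⟨x, y⟩ <;> simp [evPt]
    ring
  · rintro ⟨x, y⟩; ext <;> simp
  · rintro ⟨x, y⟩
    simp only [wt, refl_pow]; ring
  · rintro ⟨x, y⟩ h
    exact wt_eq_zero p _ hb x y (congrArg Prod.fst h)
  · rintro g (rfl | rfl | rfl) ⟨x, y⟩ <;> simp [evPt]
    ring
end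

section
/- Let A = (a_ij) be a 3×3 generalized Cartan matrix whose principal submatrix A₁₂ is of infinite type, i.e. a₁₂·a₂₁ ≥ 4, and set κ = a₁₂ω₁² + a₁₂a₂₁ω₁ω₂ + a₂₁ω₂² + a₁₂a₃₁ω₁ω₃ + a₂₁a₃₂ω₂ω₃ ∈ ℚ[ω₁,ω₂,ω₃]. Then the subalgebra P₁₂ of polynomials fixed by both σ₁ and σ₂ equals the ℚ-subalgebra of ℚ[ω₁,ω₂,ω₃] generated by κ and ω₃. -/
open MvPolynomial

/-- The quadratic polynomial
`κ = a₁₂ω₁² + a₁₂a₂₁ω₁ω₂ + a₂₁ω₂² + a₁₂a₃₁ω₁ω₃ + a₂₁a₃₂ω₂ω₃`. -/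
noncomputable def kappa (A : Matrix (Fin 3) (Fin 3) ℤ) : MvPolynomial (Fin 3) ℚ :=
  C ((A 0 1 : ℤ) : ℚ) * X 0 ^ 2 + C (((A 0 1 * A 1 0 : ℤ)) : ℚ) * X 0 * X 1 +
    C ((A 1 0 : ℤ) : ℚ) * X 1 ^ 2 + C (((A 0 1 * A 2 0 : ℤ)) : ℚ) * X 0 * X 2 +
    C (((A 1 0 * A 2 1 : ℤ)) : ℚ) * X 1 * X 2


/-- Coefficients of the orbit of the first fundamental weight under `σ₁σ₂`. -/
def orbPQ (α β : ℚ) : ℕ → ℚ × ℚ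
  | 0 => (1, β)
  | n + 1 => (α * (orbPQ α β n).2 - (orbPQ α β n).1,
      -β * (orbPQ α β n).1 + (α * β - 1) * (orbPQ α β n).2)

lemma orbPQ_inv (α β : ℚ) (hα : 0 < α) (hm : 4 ≤ α * β) (n : ℕ) :
    0 < (orbPQ α β n).1 ∧ α * β * (orbPQ α β n).1 ≤ 2 * α * (orbPQ α β n).2 ∧
    α * (orbPQ α β n).2 ^ 2 - α * β * (orbPQ α β n).1 * (orbPQ α β n).2
      + β * (orbPQ α β n).1 ^ 2 = β := by
  induction n with
  | zero => 
    refine ⟨by simp [orbPQ], by simp only [orbPQ]; nlinarith, by simp only [orbPQ]; ring⟩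
  | succ n ih =>
    obtain ⟨h1, h2, h3⟩ := ih
    simp only [orbPQ]
    set P := (orbPQ α β n).1
    set Q := (orbPQ α β n).2
    have h4 : 4 * P ≤ α * β * P := by nlinarith
    refine ⟨by nlinarith, ?_, by linear_combination h3⟩
    have h5 : (α * β - 2) * (α * β * P) ≤ (α * β - 2) * (2 * α * Q) :=
      mul_le_mul_of_nonneg_left h2 (by linarith)
    have h6 : 0 ≤ (α * β) * P * (α * β - 4) := by
      apply mul_nonneg <;> nlinarith
    nlinarith

lemma orbPQ_strictAnti (α β : ℚ) (hα : 0 < α) (hβ : 0 < β) (hm : 4 ≤ α * β) :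
    StrictAnti (fun n => (orbPQ α β n).2 / (orbPQ α β n).1) := by
  apply strictAnti_nat_of_succ_lt
  intro n
  obtain ⟨h1, h2, h3⟩ := orbPQ_inv α β hα hm n
  have h1' := (orbPQ_inv α β hα hm (n + 1)).1
  rw [div_lt_div_iff₀ h1' h1]
  simp only [orbPQ]
  nlinarith

section
variable (A : Matrix (Fin 3) (Fin 3) ℤ)

lemma sig00 (h : A 0 0 = 2) : cartanSigma A ℚ 0 (X 0) =
    - X 0 - C (A 1 0 : ℚ) * X 1 - C (A 2 0 : ℚ) * X 2 := by
  simp [cartanSigma, cartanAlpha, Fin.sum_univ_three, h]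
  ring
lemma sig01 : cartanSigma A ℚ 0 (X 1) = X 1 := by
  simp [cartanSigma]
lemma sig02 : cartanSigma A ℚ 0 (X 2) = X 2 := by
  simp [cartanSigma]
lemma sig11 (h : A 1 1 = 2) : cartanSigma A ℚ 1 (X 1) =
    - X 1 - C (A 0 1 : ℚ) * X 0 - C (A 2 1 : ℚ) * X 2 := by
  simp [cartanSigma, cartanAlpha, Fin.sum_univ_three, h]
  ring
lemma sig10 : cartanSigma A ℚ 1 (X 0) = X 0 := by
  simp [cartanSigma]
lemma sig12 : cartanSigma A ℚ 1 (X 2) = X 2 := by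
  simp [cartanSigma]
lemma sigC (j : Fin 3) (c : ℚ) : cartanSigma A ℚ j (C c) = C c :=
  (cartanSigma A ℚ j).commutes c

lemma sig_kappa0 (h : A 0 0 = 2) : cartanSigma A ℚ 0 (kappa A) = kappa A := by
  simp only [kappa, map_add, map_mul, map_pow, sigC, sig00 A h, sig01, sig02, Int.cast_mul]
  ring
lemma sig_kappa1 (h : A 1 1 = 2) : cartanSigma A ℚ 1 (kappa A) = kappa A := by
  simp only [kappa, map_add, map_mul, map_pow, sigC, sig11 A h, sig10, sig12, Int.cast_mul]
  ring

lemma sig_adjoin (j : Fin 3) (hk : cartanSigma A ℚ j (kappa A) = kappa A)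
    (hz : cartanSigma A ℚ j (X 2) = X 2) (p : MvPolynomial (Fin 3) ℚ)
    (hp : p ∈ Algebra.adjoin ℚ {kappa A, X 2}) : cartanSigma A ℚ j p = p := by
  have : Algebra.adjoin ℚ {kappa A, X 2} ≤
      AlgHom.equalizer (cartanSigma A ℚ j) (AlgHom.id ℚ _) := by
    rw [Algebra.adjoin_le_iff]
    rintro x (rfl | rfl)
    · exact hk
    · exact hz
  exact this hp

lemma reduce_mod_x (hb : A 1 0 ≠ 0) (f : MvPolynomial (Fin 3) ℚ) :
    ∃ p ∈ Algebra.adjoin ℚ {kappa A, X 2}, ∃ q ∈ Algebra.adjoin ℚ {kappa A, X 2},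
      X 0 ∣ f - (p + q * X 1) := by
  have hCm : ∀ c : ℚ, C c ∈ Algebra.adjoin ℚ {kappa A, X 2} :=
    fun c => Subalgebra.algebraMap_mem _ c
  have hk : kappa A ∈ Algebra.adjoin ℚ {kappa A, X 2} := Algebra.subset_adjoin (by simp)
  have hz : (X 2 : MvPolynomial (Fin 3) ℚ) ∈ Algebra.adjoin ℚ {kappa A, X 2} :=
    Algebra.subset_adjoin (by simp)
  induction f using MvPolynomial.induction_on with
  | C c => exact ⟨C c, hCm c, 0, zero_mem _, by simp⟩
  | add f g hf hg =>
    obtain ⟨p, hp, q, hq, u, hu⟩ := hf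
    obtain ⟨p', hp', q', hq', u', hu'⟩ := hg
    exact ⟨p + p', add_mem hp hp', q + q', add_mem hq hq', u + u',
      by linear_combination hu + hu'⟩
  | mul_X f i hf =>
    obtain ⟨p, hp, q, hq, u, hu⟩ := hf
    fin_cases i
    · exact ⟨0, zero_mem _, 0, zero_mem _, f, by simp; ring⟩
    · refine ⟨q * (C ((A 1 0 : ℚ)⁻¹) * kappa A), mul_mem hq (mul_mem (hCm _) hk),
        p - q * (C (A 2 1 : ℚ) * X 2), sub_mem hp (mul_mem hq (mul_mem (hCm _) hz)),
        u * X 1 - q * C ((A 1 0 : ℚ)⁻¹) * (C (A 0 1 : ℚ) * X 0 + C (A 0 1 : ℚ) * C (A 1 0 : ℚ) * X 1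
          + C (A 0 1 : ℚ) * C (A 2 0 : ℚ) * X 2), ?_⟩
      have hinv : (C ((A 1 0 : ℚ)⁻¹) : MvPolynomial (Fin 3) ℚ) * C (A 1 0 : ℚ) = 1 := by
        rw [← C_mul, inv_mul_cancel₀ (by exact_mod_cast hb), C_1]
      simp only [kappa, Int.cast_mul, C_mul, Fin.mk_one]
      linear_combination X 1 * hu - (q * X 1 ^ 2 + q * C (A 2 1 : ℚ) * X 1 * X 2) * hinv
    · exact ⟨p * X 2, mul_mem hp hz, q * X 2, mul_mem hq hz, u * X 2, by
        simp only [Fin.reduceFinMk]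
        linear_combination X 2 * hu⟩

lemma orbit_dvd (h0 : A 0 0 = 2) (h1 : A 1 1 = 2) (f : MvPolynomial (Fin 3) ℚ)
    (hf0 : cartanSigma A ℚ 0 f = f) (hf1 : cartanSigma A ℚ 1 f = f) (hx : X 0 ∣ f) (n : ℕ) :
    ∃ r : ℚ, (- C (orbPQ (-A 0 1) (-A 1 0) n).1 * X 0
      + C (orbPQ (-A 0 1) (-A 1 0) n).2 * X 1 + C r * X 2) ∣ f := by
  induction n with
  | zero =>
    refine ⟨-A 2 0, ?_⟩
    have := map_dvd (cartanSigma A ℚ 0) hx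
    rw [hf0, sig00 A h0] at this
    convert this using 1
    simp only [orbPQ, map_neg, map_one]
    ring
  | succ n ih =>
    obtain ⟨r, hr⟩ := ih
    have := map_dvd (cartanSigma A ℚ 0) (map_dvd (cartanSigma A ℚ 1) hr)
    rw [hf1, hf0] at this
    simp only [map_add, map_mul, map_neg, map_sub, sigC, sig00 A h0, sig01, sig02, sig10,
      sig11 A h1, sig12] at this
    refine ⟨r - A 2 1 * (orbPQ (-A 0 1) (-A 1 0) n).2 + A 2 0 * ((orbPQ (-A 0 1) (-A 1 0) n).1 + A 0 1 * (orbPQ (-A 0 1) (-A 1 0) n).2), ?_⟩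
    convert this using 1
    simp only [orbPQ, map_neg, map_one, map_add, map_sub, map_mul]
    ring

lemma eq_zero_of_inv (h0 : A 0 0 = 2) (h1 : A 1 1 = 2) (ha : A 0 1 < 0) (hb : A 1 0 < 0)
    (hinf : 4 ≤ A 0 1 * A 1 0) (f : MvPolynomial (Fin 3) ℚ)
    (hf0 : cartanSigma A ℚ 0 f = f) (hf1 : cartanSigma A ℚ 1 f = f) (hx : X 0 ∣ f) :
    f = 0 := by
  have hα : (0 : ℚ) < -A 0 1 := by exact_mod_cast neg_pos.mpr ha
  have hβ : (0 : ℚ) < -A 1 0 := by exact_mod_cast neg_pos.mpr hb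
  have hm : (4 : ℚ) ≤ (-A 0 1) * (-A 1 0) := by rw [neg_mul_neg]; exact_mod_cast hinf
  choose r hr using orbit_dvd A h0 h1 f hf0 hf1 hx
  have hanti := orbPQ_strictAnti _ _ hα hβ hm
  have hpos := fun n => (orbPQ_inv _ _ hα hm n).1
  generalize orbPQ (-A 0 1 : ℚ) (-A 1 0) = s at *
  apply (finSuccEquiv ℚ 2).injective
  rw [map_zero]
  apply Polynomial.eq_zero_of_infinite_isRoot
  refine Set.infinite_of_injective_forall_mem (f := fun n : ℕ =>
    (C ((s n).2 / (s n).1) * X 0 + C (r n / (s n).1) * X 1 : MvPolynomial (Fin 2) ℚ)) ?_ ?_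
  · intro m n hmn
    apply hanti.injective
    have := congrArg (MvPolynomial.eval (![1, 0] : Fin 2 → ℚ)) hmn
    simpa using this
  · intro n
    obtain ⟨g, hg⟩ := hr n
    have e0 : finSuccEquiv ℚ 2 (X 0) = Polynomial.X := finSuccEquiv_X_zero
    have e1 : finSuccEquiv ℚ 2 (X 1) = Polynomial.C (X 0) := finSuccEquiv_X_succ (j := 0)
    have e2 : finSuccEquiv ℚ 2 (X 2) = Polynomial.C (X 1) := finSuccEquiv_X_succ (j := 1)
    have eC : ∀ c : ℚ, finSuccEquiv ℚ 2 (C c) = Polynomial.C (C c) := fun c => by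
      simp [finSuccEquiv_apply]
    have hp : (s n).1 ≠ 0 := (hpos n).ne'
    have k1 : (C (s n).1 : MvPolynomial (Fin 2) ℚ) * C ((s n).2 / (s n).1) = C (s n).2 := by
      rw [← C_mul, mul_div_cancel₀ _ hp]
    have k2 : (C (s n).1 : MvPolynomial (Fin 2) ℚ) * C (r n / (s n).1) = C (r n) := by
      rw [← C_mul, mul_div_cancel₀ _ hp]
    show Polynomial.IsRoot _ _
    rw [Polynomial.IsRoot.def, hg]
    simp only [map_mul, map_add, map_neg, e0, e1, e2, eC, Polynomial.eval_mul,
      Polynomial.eval_add, Polynomial.eval_neg, Polynomial.eval_X, Polynomial.eval_C]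
    apply mul_eq_zero_of_left
    linear_combination (- X 0) * k1 - X 1 * k2

end

/-- If `A` is a 3×3 generalized Cartan matrix with `a₁₂ a₂₁ ≥ 4`, then the
subalgebra `P₁₂` of polynomials fixed by both `σ₁` and `σ₂` is the `ℚ`-subalgebra
generated by `κ` and `ω₃`. -/
theorem P12_eq_adjoin_kappa_omega3 (A : Matrix (Fin 3) (Fin 3) ℤ) (hA : IsGCM A)
    (hinf : 4 ≤ A 0 1 * A 1 0) :
    {q : MvPolynomial (Fin 3) ℚ |
        cartanSigma A ℚ 0 q = q ∧ cartanSigma A ℚ 1 q = q} =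
      ↑(Algebra.adjoin ℚ {kappa A, X 2}) := by
  obtain ⟨hd, hn, -⟩ := hA
  have ha : A 0 1 < 0 := lt_of_le_of_ne (hn 0 1 (by decide)) (by rintro h; simp [h] at hinf)
  have hb : A 1 0 < 0 := lt_of_le_of_ne (hn 1 0 (by decide)) (by rintro h; simp [h] at hinf)
  have g0 := sig_adjoin A 0 (sig_kappa0 A (hd 0)) (sig02 A)
  have g1 := sig_adjoin A 1 (sig_kappa1 A (hd 1)) (sig12 A)
  ext f
  simp only [Set.mem_setOf_eq, SetLike.mem_coe]
  refine ⟨?_, fun h => ⟨g0 f h, g1 f h⟩⟩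
  rintro ⟨hf0, hf1⟩
  obtain ⟨p, hp, q, hq, u, hu⟩ := reduce_mod_x A hb.ne f
  have hu' := congrArg (cartanSigma A ℚ 1) hu
  simp only [map_sub, map_add, map_mul, hf1, g1 p hp, g1 q hq, sig11 A (hd 1), sig10] at hu'
  have hw : p - C (1 / 2) * (C (A 2 1 : ℚ) * X 2) * q ∈ Algebra.adjoin ℚ {kappa A, X 2} :=
    sub_mem hp (mul_mem (mul_mem (Subalgebra.algebraMap_mem _ (1 / 2 : ℚ))
      (mul_mem (Subalgebra.algebraMap_mem _ (A 2 1 : ℚ)) (Algebra.subset_adjoin (by simp)))) hq)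
  set w := p - C (1 / 2) * (C (A 2 1 : ℚ) * X 2) * q with hwdef
  have half : (C (1 / 2) : MvPolynomial (Fin 3) ℚ) * 2 = 1 := by
    rw [← map_ofNat C 2, ← C_mul]; norm_num
  have hz : f - w = 0 := by
    apply eq_zero_of_inv A (hd 0) (hd 1) ha hb hinf
    · rw [map_sub, hf0, g0 w hw]
    · rw [map_sub, hf1, g1 w hw]
    · refine ⟨C (1 / 2) * (u + cartanSigma A ℚ 1 u - q * C (A 0 1 : ℚ)), ?_⟩
      rw [hwdef]
      linear_combination C (1 / 2) * hu + C (1 / 2) * hu' - (f - p) * half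
  rw [sub_eq_zero.mp hz]
  exact hw
end

section
/- Let A = (a_ij) be a 3×3 generalized Cartan matrix with a₁₂·a₂₁ ≥ 4, and let P₁₂ be the subalgebra of ℚ[ω₁,ω₂,ω₃] of polynomials fixed by both σ₁ and σ₂. Then for every n ≥ 0 the homogeneous component of (polynomial) degree n of P₁₂ has ℚ-dimension equal to ⌊n/2⌋ + 1, i.e. the Hilbert series of P₁₂ is 1/((1−t)(1−t²)) in polynomial degree (equivalently 1/((1−t²)(1−t⁴)) when each ω_i is given cohomological degree 2). -/
open MvPolynomial

/-- The subspace of `σ_j`-invariant polynomials. -/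
noncomputable def fixedSubmodule (A : Matrix (Fin 3) (Fin 3) ℤ) (F : Type*) [Field F]
    (j : Fin 3) : Submodule F (MvPolynomial (Fin 3) F) :=
  LinearMap.ker ((cartanSigma A F j).toLinearMap - LinearMap.id)

/-- The space of homogeneous invariants of degree `n`. -/
noncomputable def invSpace (A : Matrix (Fin 3) (Fin 3) ℤ) (n : ℕ) :
    Submodule ℚ (MvPolynomial (Fin 3) ℚ) :=
  homogeneousSubmodule (Fin 3) ℚ n ⊓ fixedSubmodule A ℚ 0 ⊓ fixedSubmodule A ℚ 1

lemma mem_invSpace (A : Matrix (Fin 3) (Fin 3) ℤ) (n : ℕ) (f : MvPolynomial (Fin 3) ℚ) :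
    f ∈ invSpace A n ↔
      f.IsHomogeneous n ∧ cartanSigma A ℚ 0 f = f ∧ cartanSigma A ℚ 1 f = f := by
  simp [invSpace, fixedSubmodule, Submodule.mem_inf, sub_eq_zero, and_assoc]

lemma eval_homog {n : ℕ} {f : MvPolynomial (Fin 3) ℚ} (hf : f.IsHomogeneous n) (c : ℚ)
    (v : Fin 3 → ℚ) : eval (fun i => c * v i) f = c ^ n * eval v f := by
  rw [eval_eq, eval_eq, Finset.mul_sum]
  refine Finset.sum_congr rfl fun d hd => ?_
  have h := hf.degree_eq_sum_deg_support hd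
  simp only [mul_pow, Finset.prod_mul_distrib, Finset.prod_pow_eq_pow_sum]
  have h2 : ∑ i ∈ d.support, d i = n := h.symm
  rw [h2]
  ring

lemma eval_sigma (A : Matrix (Fin 3) (Fin 3) ℤ) (j : Fin 3) (v : Fin 3 → ℚ)
    (f : MvPolynomial (Fin 3) ℚ) :
    eval v (cartanSigma A ℚ j f) = eval (fun i => eval v (cartanSigma A ℚ j (X i))) f := by
  induction f using MvPolynomial.induction_on with
  | C a => simp [cartanSigma]
  | add p q hp hq => simp only [map_add, hp, hq]
  | mul_X p i hp => simp only [map_mul, hp, eval_X]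

lemma eval_sigma0 (A : Matrix (Fin 3) (Fin 3) ℤ) (hA : IsGCM A) (p q : ℚ)
    (f : MvPolynomial (Fin 3) ℚ) (hf : cartanSigma A ℚ 0 f = f) :
    eval ![-p - A 1 0 * q, q, 0] f = eval ![p, q, 0] f := by
  conv_rhs => rw [← hf, eval_sigma]
  congr 2
  have := hA.1 0
  funext i
  fin_cases i <;> simp [cartanSigma, cartanAlpha, Fin.sum_univ_three, this]
  ring

lemma eval_sigma1 (A : Matrix (Fin 3) (Fin 3) ℤ) (hA : IsGCM A) (p q : ℚ)
    (f : MvPolynomial (Fin 3) ℚ) (hf : cartanSigma A ℚ 1 f = f) :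
    eval ![p, -q - A 0 1 * p, 0] f = eval ![p, q, 0] f := by
  conv_rhs => rw [← hf, eval_sigma]
  congr 2
  have := hA.1 1
  funext i
  fin_cases i <;> simp [cartanSigma, cartanAlpha, Fin.sum_univ_three, this]
  ring

/-- The orbit of `(1, -a)`. -/
def orb (a b : ℚ) : ℕ → ℚ × ℚ
  | 0 => (1, -a)
  | n + 1 => (-(orb a b n).1 - b * (orb a b n).2,
      -(orb a b n).2 - a * (-(orb a b n).1 - b * (orb a b n).2))

lemma orb_inv (a b : ℚ) (ha : a < 0) (hb : b < 0) (hab : 4 ≤ a * b) (n : ℕ) :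
    0 < (orb a b n).2 ∧ 2 * (orb a b n).1 < -b * (orb a b n).2 ∧
    a * (orb a b n).1 ^ 2 + a * b * (orb a b n).1 * (orb a b n).2 + b * (orb a b n).2 ^ 2 = a ∧
    (orb a b n).2 < (orb a b (n + 1)).2 := by
  have key : ∀ p q : ℚ, 0 < q → 2 * p < -b * q → q < -q - a * (-p - b * q) := by
    intro p q hq hp
    nlinarith [mul_pos (neg_pos.2 ha) (sub_pos.2 hp), mul_nonneg (sub_nonneg.2 hab) hq.le]
  induction n with
  | zero =>
    have h1 : 0 < (orb a b 0).2 := by simpa [orb] using ha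
    have h2 : 2 * (orb a b 0).1 < -b * (orb a b 0).2 := by
      simp only [orb]; nlinarith
    refine ⟨h1, h2, ?_, key _ _ h1 h2⟩
    simp only [orb]; ring
  | succ n ih =>
    obtain ⟨h1, h2, h3, h4⟩ := ih
    have h5 : 0 < (orb a b (n + 1)).2 := h1.trans h4
    have h6 : 2 * (orb a b (n + 1)).1 < -b * (orb a b (n + 1)).2 := by
      simp only [orb]
      set p := (orb a b n).1
      set q := (orb a b n).2
      have : 0 < -p - b * q := by nlinarith
      nlinarith [mul_nonneg (sub_nonneg.2 hab) this.le]
    refine ⟨h5, h6, ?_, key _ _ h5 h6⟩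
    refine Eq.trans ?_ h3
    simp only [orb]
    ring

lemma orb_eval (A : Matrix (Fin 3) (Fin 3) ℤ) (hA : IsGCM A) (f : MvPolynomial (Fin 3) ℚ)
    (h0 : cartanSigma A ℚ 0 f = f) (h1 : cartanSigma A ℚ 1 f = f) (n : ℕ) :
    eval ![(orb (A 0 1) (A 1 0) n).1, (orb (A 0 1) (A 1 0) n).2, 0] f = eval ![1, 0, 0] f := by
  induction n with
  | zero =>
    rw [← eval_sigma1 A hA 1 0 f h1]
    simp [orb]
  | succ n ih =>
    exact (eval_sigma1 A hA _ _ f h1).trans ((eval_sigma0 A hA _ _ f h0).trans ih)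

/-- Signs of the off-diagonal entries. -/
lemma signs (A : Matrix (Fin 3) (Fin 3) ℤ) (hA : IsGCM A) (hinf : 4 ≤ A 0 1 * A 1 0) :
    (A 0 1 : ℚ) < 0 ∧ (A 1 0 : ℚ) < 0 ∧ (4 : ℚ) ≤ A 0 1 * A 1 0 := by
  have h1 := hA.2.1 0 1 (by decide)
  have h2 := hA.2.1 1 0 (by decide)
  refine ⟨?_, ?_, by exact_mod_cast hinf⟩
  · have : A 0 1 ≠ 0 := by rintro h; simp [h] at hinf
    exact_mod_cast lt_of_le_of_ne h1 this
  · have : A 1 0 ≠ 0 := by rintro h; simp [h] at hinf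
    exact_mod_cast lt_of_le_of_ne h2 this

lemma slice_zero (A : Matrix (Fin 3) (Fin 3) ℤ) (hA : IsGCM A)
    (hinf : 4 ≤ A 0 1 * A 1 0) (n : ℕ) (f : MvPolynomial (Fin 3) ℚ) (hf : f ∈ invSpace A n)
    (hv : eval ![1, 0, 0] f = 0) (t : ℚ) : eval ![t, 1, 0] f = 0 := by
  obtain ⟨hh, h0, h1⟩ := (mem_invSpace A n f).1 hf
  obtain ⟨ha, hb, hab⟩ := signs A hA hinf
  set a : ℚ := (A 0 1 : ℚ)
  set b : ℚ := (A 1 0 : ℚ)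
  let g : Polynomial ℚ := aeval ![Polynomial.X, 1, 0] f
  have hg : ∀ t, g.eval t = eval ![t, 1, 0] f := by
    intro t
    have : (Polynomial.aeval t).comp (aeval ![Polynomial.X, 1, 0]) =
        (aeval ![t, 1, 0] : MvPolynomial (Fin 3) ℚ →ₐ[ℚ] ℚ) := by
      apply MvPolynomial.algHom_ext
      intro i
      fin_cases i <;> simp
    have h := congrArg (fun φ => φ f) this
    simpa [g] using h
  have hinv := orb_inv a b ha hb hab
  have hmono : StrictMono fun n => (orb a b n).2 := strictMono_nat_of_lt_succ fun n => (hinv n).2.2.2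
  have hinj : Function.Injective fun n => (orb a b n).1 / (orb a b n).2 := by
    intro i j hij
    apply hmono.injective
    obtain ⟨hi1, -, hi3, -⟩ := hinv i
    obtain ⟨hj1, -, hj3, -⟩ := hinv j
    simp only at hij ⊢
    set p := (orb a b i).1
    set q := (orb a b i).2
    set pj := (orb a b j).1
    set qj := (orb a b j).2
    set s := p / q with hs
    have e1 : p = s * q := by rw [hs]; field_simp
    have e2 : pj = s * qj := by rw [hij]; field_simp
    rw [e1] at hi3
    rw [e2] at hj3
    have h3 : (a * s ^ 2 + a * b * s + b) * q ^ 2 = a := by linear_combination hi3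
    have h4 : (a * s ^ 2 + a * b * s + b) * qj ^ 2 = a := by linear_combination hj3
    have h5 : a * s ^ 2 + a * b * s + b ≠ 0 := by
      intro h; rw [h] at h3; simp at h3; exact ha.ne h3.symm
    have h6 : q ^ 2 = qj ^ 2 := mul_left_cancel₀ h5 (h3.trans h4.symm)
    exact (pow_left_inj₀ hi1.le hj1.le two_ne_zero).1 h6
  have g0 : g = 0 := by
    refine Polynomial.eq_zero_of_infinite_isRoot g ?_
    refine (Set.infinite_range_of_injective hinj).mono ?_
    rintro _ ⟨k, rfl⟩
    have hq := (hinv k).1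
    have e := orb_eval A hA f h0 h1 k
    rw [hv] at e
    have e2 := eval_homog hh (orb a b k).2⁻¹ ![(orb a b k).1, (orb a b k).2, 0]
    rw [e, mul_zero] at e2
    change g.eval _ = 0
    rw [hg]
    refine Eq.trans ?_ e2
    congr 2
    funext i
    fin_cases i
    · simp [div_eq_inv_mul]
    · simp [hq.ne']
    · simp
  rw [← hg, g0]; simp

lemma X_dvd_of_eval (n : ℕ) (f : MvPolynomial (Fin 3) ℚ) (hf : f.IsHomogeneous n)
    (h : ∀ t : ℚ, eval ![t, 1, 0] f = 0) : X 2 ∣ f := by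
  let φ : MvPolynomial (Fin 3) ℚ →ₐ[ℚ] MvPolynomial (Fin 3) ℚ := aeval ![X 0, X 1, 0]
  have hev : ∀ v, eval v (φ f) = eval ![v 0, v 1, 0] f := by
    intro v
    have : (aeval v).comp φ = (aeval ![v 0, v 1, 0] : MvPolynomial (Fin 3) ℚ →ₐ[ℚ] ℚ) := by
      apply MvPolynomial.algHom_ext
      intro i
      fin_cases i <;> simp [φ]
    have h := congrArg (fun φ => φ f) this
    simpa using h
  have h1 : φ f * X 1 = 0 := by
    apply MvPolynomial.funext
    intro v
    simp only [map_mul, eval_X, map_zero, hev]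
    by_cases hv : v 1 = 0
    · simp [hv]
    · have e := eval_homog hf (v 1) ![v 0 / v 1, 1, 0]
      rw [h, mul_zero] at e
      rw [mul_eq_zero]; left
      refine Eq.trans ?_ e
      congr 2
      funext i
      fin_cases i
      · simp; field_simp
      · simp
      · simp
  have h2 : φ f = 0 := (mul_eq_zero.1 h1).resolve_right (X_ne_zero 1)
  have h3 : (Ideal.Quotient.mkₐ ℚ (Ideal.span {(X 2 : MvPolynomial (Fin 3) ℚ)})).comp φ =
      Ideal.Quotient.mkₐ ℚ (Ideal.span {(X 2 : MvPolynomial (Fin 3) ℚ)}) := by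
    apply MvPolynomial.algHom_ext
    intro i
    fin_cases i
    · simp [φ]
    · simp [φ]
    · simp only [φ, AlgHom.comp_apply]
      symm
      simpa using Ideal.Quotient.eq_zero_iff_mem.2 (Ideal.mem_span_singleton_self _)
  have h4 := congrArg (fun φ => φ f) h3
  simp only [AlgHom.comp_apply, h2, map_zero] at h4
  exact Ideal.mem_span_singleton.1 (Ideal.Quotient.eq_zero_iff_mem.1 h4.symm)

lemma sigma_X2 (A : Matrix (Fin 3) (Fin 3) ℤ) :
    cartanSigma A ℚ 0 (X 2) = X 2 ∧ cartanSigma A ℚ 1 (X 2) = X 2 := by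
  simp [cartanSigma]

lemma mul_X2_mem (A : Matrix (Fin 3) (Fin 3) ℤ) (n : ℕ) (g : MvPolynomial (Fin 3) ℚ) :
    X 2 * g ∈ invSpace A (n + 1) ↔ g ∈ invSpace A n := by
  rw [mem_invSpace, mem_invSpace]
  simp only [map_mul, sigma_X2, mul_right_inj' (X_ne_zero (R := ℚ) (2 : Fin 3))]
  refine and_congr_left fun _ => ⟨fun h => ?_, fun h => ?_⟩
  · intro d hd
    have := @h (Finsupp.single 2 1 + d) (by rwa [coeff_X_mul])
    rw [map_add] at this
    simp only [Finsupp.weight_single, Pi.one_apply, smul_eq_mul, mul_one] at this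
    omega
  · rw [add_comm]; exact (isHomogeneous_X ℚ 2).mul h

/-- Evaluation at the point `(1,0,0)` on the invariants. -/
noncomputable def evInv (A : Matrix (Fin 3) (Fin 3) ℤ) (n : ℕ) : invSpace A n →ₗ[ℚ] ℚ :=
  (aeval (![1, 0, 0] : Fin 3 → ℚ)).toLinearMap.comp (invSpace A n).subtype

lemma evInv_apply (A : Matrix (Fin 3) (Fin 3) ℤ) (n : ℕ) (f : invSpace A n) :
    evInv A n f = eval ![1, 0, 0] f.1 := by
  simp [evInv]

lemma evInv_odd (A : Matrix (Fin 3) (Fin 3) ℤ) (hA : IsGCM A) (n : ℕ) (hn : Odd n) :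
    LinearMap.range (evInv A n) = ⊥ := by
  rw [LinearMap.range_eq_bot]
  ext ⟨f, hf⟩
  obtain ⟨hh, h0, h1⟩ := (mem_invSpace A n f).1 hf
  have e1 := eval_sigma0 A hA 1 0 f h0
  have e2 := eval_homog hh (-1) ![1, 0, 0]
  rw [hn.neg_one_pow] at e2
  have e3 : (fun i => (-1 : ℚ) * (![1, 0, 0] : Fin 3 → ℚ) i) = ![-1 - (A 1 0 : ℚ) * 0, 0, 0] := by
    funext i
    fin_cases i <;> simp
  rw [e3, e1] at e2
  rw [evInv_apply]
  simp only [LinearMap.zero_apply]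
  linarith

/-- The quadratic invariant. -/
noncomputable def quadInv (A : Matrix (Fin 3) (Fin 3) ℤ) : MvPolynomial (Fin 3) ℚ :=
  C (A 0 1 : ℚ) * (X 0 * X 0) + C (A 0 1 * A 1 0 : ℚ) * (X 0 * X 1) + C (A 1 0 : ℚ) * (X 1 * X 1)
    + C (A 0 1 * A 2 0 : ℚ) * (X 0 * X 2) + C (A 1 0 * A 2 1 : ℚ) * (X 1 * X 2)

lemma quadInv_mem (A : Matrix (Fin 3) (Fin 3) ℤ) (hA : IsGCM A) : quadInv A ∈ invSpace A 2 := by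
  rw [mem_invSpace]
  refine ⟨?_, ?_, ?_⟩
  · have h : ∀ (c : ℚ) (i j : Fin 3), (C c * (X i * X j)).IsHomogeneous 2 := fun c i j =>
      ((isHomogeneous_X ℚ i).mul (isHomogeneous_X ℚ j)).C_mul c
    exact ((((h _ _ _).add (h _ _ _)).add (h _ _ _)).add (h _ _ _)).add (h _ _ _)
  · have := hA.1 0
    simp [quadInv, cartanSigma, cartanAlpha, Fin.sum_univ_three, this]
    ring
  · have := hA.1 1
    simp [quadInv, cartanSigma, cartanAlpha, Fin.sum_univ_three, this]
    ring

lemma evInv_even (A : Matrix (Fin 3) (Fin 3) ℤ) (hA : IsGCM A)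
    (hinf : 4 ≤ A 0 1 * A 1 0) (n : ℕ) (hn : Even n) :
    LinearMap.range (evInv A n) = ⊤ := by
  obtain ⟨k, rfl⟩ := hn
  obtain ⟨ha, -, -⟩ := signs A hA hinf
  obtain ⟨hh, h0, h1⟩ := (mem_invSpace A 2 _).1 (quadInv_mem A hA)
  have hm : quadInv A ^ k ∈ invSpace A (k + k) := by
    rw [mem_invSpace]
    refine ⟨?_, by rw [map_pow, h0], by rw [map_pow, h1]⟩
    have := hh.pow k
    rwa [two_mul] at this
  have hne : evInv A (k + k) ⟨_, hm⟩ ≠ 0 := by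
    rw [evInv_apply]
    simp only [map_pow]
    apply pow_ne_zero
    simpa [quadInv] using ha.ne
  rw [LinearMap.range_eq_top]
  exact LinearMap.surjective (fun h => hne (by rw [h]; rfl))

instance (A : Matrix (Fin 3) (Fin 3) ℤ) (n : ℕ) : Module.Finite ℚ (invSpace A n) := by
  have : Module.Finite ℚ (homogeneousSubmodule (Fin 3) ℚ n) :=
    Module.Finite.iff_fg.2 (homogeneousSubmodule_fg _ _ n)
  exact Submodule.finiteDimensional_of_le (S₂ := homogeneousSubmodule (Fin 3) ℚ n)
    (inf_le_left.trans inf_le_left)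

lemma ker_zero (A : Matrix (Fin 3) (Fin 3) ℤ) : LinearMap.ker (evInv A 0) = ⊥ := by
  rw [LinearMap.ker_eq_bot']
  rintro ⟨f, hf⟩ h
  rw [evInv_apply] at h
  have hh := ((mem_invSpace A 0 f).1 hf).1
  rw [← totalDegree_zero_iff_isHomogeneous, totalDegree_eq_zero_iff_eq_C] at hh
  have hz : eval ![1, 0, 0] f = 0 := h
  rw [hh, eval_C] at hz
  apply Subtype.ext
  change f = 0
  rw [hh, hz, C_0]

lemma finrank_ker_succ (A : Matrix (Fin 3) (Fin 3) ℤ) (hA : IsGCM A)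
    (hinf : 4 ≤ A 0 1 * A 1 0) (n : ℕ) :
    Module.finrank ℚ (LinearMap.ker (evInv A (n + 1))) = Module.finrank ℚ (invSpace A n) := by
  let m : invSpace A n →ₗ[ℚ] invSpace A (n + 1) :=
    ((LinearMap.mulLeft ℚ (X 2 : MvPolynomial (Fin 3) ℚ)).comp (invSpace A n).subtype).codRestrict
      _ (fun g => (mul_X2_mem A n g.1).2 g.2)
  have hm : Function.Injective m := by
    intro g h hgh
    have : X 2 * g.1 = X 2 * h.1 := congrArg Subtype.val hgh
    exact Subtype.ext (mul_left_cancel₀ (X_ne_zero (R := ℚ) (2 : Fin 3)) this)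
  have hr : LinearMap.range m = LinearMap.ker (evInv A (n + 1)) := by
    apply le_antisymm
    · rintro _ ⟨g, rfl⟩
      rw [LinearMap.mem_ker, evInv_apply]
      change eval _ (X 2 * g.1) = 0
      simp
    · rintro ⟨f, hf⟩ h
      rw [LinearMap.mem_ker, evInv_apply] at h
      obtain ⟨g, rfl⟩ := X_dvd_of_eval (n + 1) f ((mem_invSpace A _ f).1 hf).1
        (slice_zero A hA hinf (n + 1) f hf h)
      exact ⟨⟨g, (mul_X2_mem A n g).1 hf⟩, rfl⟩
  rw [← hr, LinearMap.finrank_range_of_inj hm]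

lemma finrank_invSpace (A : Matrix (Fin 3) (Fin 3) ℤ) (hA : IsGCM A)
    (hinf : 4 ≤ A 0 1 * A 1 0) (n : ℕ) :
    Module.finrank ℚ (invSpace A n) = n / 2 + 1 := by
  induction n with
  | zero =>
    rw [← LinearMap.finrank_range_add_finrank_ker (evInv A 0), ker_zero,
      evInv_even A hA hinf 0 (by simp)]
    simp
  | succ n ih =>
    rw [← LinearMap.finrank_range_add_finrank_ker (evInv A (n + 1)),
      finrank_ker_succ A hA hinf, ih]
    rcases Nat.even_or_odd (n + 1) with h | h
    · rw [evInv_even A hA hinf _ h, finrank_top, Module.finrank_self]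
      obtain ⟨k, hk⟩ := h
      omega
    · rw [evInv_odd A hA _ h, finrank_bot]
      obtain ⟨k, hk⟩ := h
      omega

/-- If `A` is a 3×3 generalized Cartan matrix with `a₁₂ a₂₁ ≥ 4`, the homogeneous
component of polynomial degree `n` of the invariant subalgebra
`P₁₂ = Fix σ₁ ∩ Fix σ₂` of `ℚ[ω₁,ω₂,ω₃]` has dimension `⌊n/2⌋ + 1`, i.e. the
Hilbert series of `P₁₂` is `1/((1−t)(1−t²))` in polynomial degree. -/
theorem hilbert_series_P12 (A : Matrix (Fin 3) (Fin 3) ℤ) (hA : IsGCM A)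
    (hinf : 4 ≤ A 0 1 * A 1 0) (n : ℕ) :
    Module.finrank ℚ
      ↥(homogeneousSubmodule (Fin 3) ℚ n ⊓ fixedSubmodule A ℚ 0 ⊓ fixedSubmodule A ℚ 1) =
      n / 2 + 1 := by
  exact finrank_invSpace A hA hinf n
end

section
/- Let A = (a_ij) be a 3×3 generalized Cartan matrix with a₁₃·a₃₁ ≥ 4 (so that the principal submatrix A₁₃ is of infinite type). Then in ℚ[ω₁,ω₂,ω₃] one has P₁ + (P₁₂ + P₃) = ℚ[ω₁,ω₂,ω₃] and P₁ ∩ (P₁₂ + P₃) = P₁₂ + P₁₃, where sums are sums of ℚ-subspaces; consequently the inclusion P₁ ⊆ ℚ[ω₁,ω₂,ω₃] induces an isomorphism of ℚ-vector spaces P₁/(P₁₂ + P₁₃) ≅ ℚ[ω₁,ω₂,ω₃]/(P₁₂ + P₃). -/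
open MvPolynomial

/-- Sequence lemma: a two-term recurrence with real positive characteristic roots. -/
lemma seq_mem {V : Type*} [AddCommGroup V] [Module ℚ V] (T : Submodule ℚ V) (w : ℕ → V) (n : ℕ)
    (B c : ℚ) (hB : 0 < B) (hc : 0 ≤ c) (hd : 4 * c ≤ B ^ 2) (hn : 1 ≤ n)
    (h0 : w 0 ∈ T) (hw : w n ∈ T)
    (hr : ∀ k, k + 2 ≤ n → w (k + 2) - B • w (k + 1) + c • w k ∈ T) :
    ∀ k, k ≤ n → w k ∈ T := by
  have key : ∀ k, ∃ u v : ℚ, 0 ≤ u ∧ 0 < v ∧ B * u < 2 * v ∧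
      (k + 1 ≤ n → w k - u • w 1 ∈ T ∧ w (k + 1) - v • w 1 ∈ T) := by
    intro k
    induction k with
    | zero => exact ⟨0, 1, le_rfl, one_pos, by norm_num, fun _ => by simpa using h0⟩
    | succ k ih =>
      obtain ⟨u, v, hu, hv, huv, h⟩ := ih
      have e1 : B * v < 2 * (B * v - c * u) := by
        have h1 : 4 * c * u ≤ B ^ 2 * u := mul_le_mul_of_nonneg_right hd hu
        have h2 : B * (B * u) < B * (2 * v) := mul_lt_mul_of_pos_left huv hB
        nlinarith
      have e2 : 0 < B * v := mul_pos hB hv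
      refine ⟨v, B * v - c * u, hv.le, by linarith, e1, fun hk => ?_⟩
      obtain ⟨ha, hb⟩ := h (by omega)
      refine ⟨hb, ?_⟩
      have := T.add_mem (T.sub_mem (hr k (by omega)) (T.smul_mem c ha)) (T.smul_mem B hb)
      convert this using 1
      module
  have h1 : w 1 ∈ T := by
    obtain ⟨m, rfl⟩ : ∃ m, n = m + 1 := ⟨n - 1, by omega⟩
    obtain ⟨u, v, hu, hv, huv, h⟩ := key m
    have h2 := T.sub_mem hw (h le_rfl).2
    rw [sub_sub_cancel] at h2
    exact (T.smul_mem_iff hv.ne').1 h2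
  intro k hk
  rcases k with _ | k
  · exact h0
  · obtain ⟨u, v, hu, hv, huv, h⟩ := key k
    have := T.add_mem (h hk).2 (T.smul_mem v h1)
    simpa using this

lemma mem_fixed (A : Matrix (Fin 3) (Fin 3) ℤ) (j : Fin 3) (f : MvPolynomial (Fin 3) ℚ) :
    f ∈ fixedSubmodule A ℚ j ↔ cartanSigma A ℚ j f = f := by
  simp [fixedSubmodule, sub_eq_zero]

lemma mul_fixed {A : Matrix (Fin 3) (Fin 3) ℤ} {j : Fin 3} {f g : MvPolynomial (Fin 3) ℚ}
    (hf : f ∈ fixedSubmodule A ℚ j) (hg : g ∈ fixedSubmodule A ℚ j) :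
    f * g ∈ fixedSubmodule A ℚ j := by
  rw [mem_fixed] at *
  rw [map_mul, hf, hg]

lemma X_fixed (A : Matrix (Fin 3) (Fin 3) ℤ) {i j : Fin 3} (h : i ≠ j) :
    X i ∈ fixedSubmodule A ℚ j := by
  rw [mem_fixed]
  simp [cartanSigma, h]

/-- Degree `n` part of `P₁ + P₃`. -/
noncomputable def gradedT (A : Matrix (Fin 3) (Fin 3) ℤ) (n : ℕ) :
    Submodule ℚ (MvPolynomial (Fin 3) ℚ) :=
  (fixedSubmodule A ℚ 0 ⊓ homogeneousSubmodule (Fin 3) ℚ n) ⊔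
    (fixedSubmodule A ℚ 2 ⊓ homogeneousSubmodule (Fin 3) ℚ n)

lemma gradedT_mul (A : Matrix (Fin 3) (Fin 3) ℤ) {n m : ℕ} {f p p' : MvPolynomial (Fin 3) ℚ}
    {S : Submodule ℚ (MvPolynomial (Fin 3) ℚ)} {q : MvPolynomial (Fin 3) ℚ}
    (hS : gradedT A (m + n) ≤ S)
    (hp : p ∈ fixedSubmodule A ℚ 0) (hp' : p' ∈ fixedSubmodule A ℚ 2)
    (dp : p.IsHomogeneous m) (dp' : p'.IsHomogeneous m)
    (h1 : ∀ g : MvPolynomial (Fin 3) ℚ, g.IsHomogeneous n → (q - p) * g ∈ S)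
    (h2 : ∀ g : MvPolynomial (Fin 3) ℚ, g.IsHomogeneous n → (q - p') * g ∈ S)
    (hf : f ∈ gradedT A n) : q * f ∈ S := by
  obtain ⟨g, hg, h, hh, rfl⟩ := Submodule.mem_sup.1 hf
  obtain ⟨hg, dg⟩ := hg
  obtain ⟨hh, dh⟩ := hh
  have a1 : p * g ∈ S := hS (Submodule.mem_sup_left ⟨mul_fixed hp hg, dp.mul dg⟩)
  have a2 : p' * h ∈ S := hS (Submodule.mem_sup_right ⟨mul_fixed hp' hh, dp'.mul dh⟩)
  have := S.add_mem (S.add_mem a1 a2) (S.add_mem (h1 g dg) (h2 h dh))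
  convert this using 1
  ring

lemma z_mul (A : Matrix (Fin 3) (Fin 3) ℤ) {n : ℕ} {f : MvPolynomial (Fin 3) ℚ}
    (hf : f ∈ gradedT A n) : X 1 * f ∈ gradedT A (1 + n) :=
  gradedT_mul A (p := X 1) (p' := X 1) le_rfl (X_fixed A (by decide)) (X_fixed A (by decide))
    (isHomogeneous_X _ _) (isHomogeneous_X _ _) (by simp) (by simp) hf

lemma pow_fixed (A : Matrix (Fin 3) (Fin 3) ℤ) {i j : Fin 3} (h : i ≠ j) (n : ℕ) :
    X i ^ n ∈ fixedSubmodule A ℚ j := by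
  rw [mem_fixed]
  simp [cartanSigma, h]

lemma q_mul (A : Matrix (Fin 3) (Fin 3) ℤ) (hA : IsGCM A) (c : ℚ) (hc : c * A 0 2 = A 2 0) {n : ℕ}
    (ih : ∀ f : MvPolynomial (Fin 3) ℚ, f.IsHomogeneous (1 + n) → f ∈ gradedT A (1 + n))
    {f : MvPolynomial (Fin 3) ℚ} (hf : f ∈ gradedT A n) :
    (X 0 ^ 2 + C (A 2 0 : ℚ) * X 0 * X 2 + C c * X 2 ^ 2) * f ∈ gradedT A (2 + n) := by
  have hX : ∀ i : Fin 3, (X i : MvPolynomial (Fin 3) ℚ).IsHomogeneous 1 := isHomogeneous_X _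
  have h00 := hA.1 0
  have h22 := hA.1 2
  have hcC : (C (A 2 0 : ℚ) : MvPolynomial (Fin 3) ℚ) = C c * C (A 0 2 : ℚ) := by
    rw [← C_mul, hc]
  have hz : ∀ (r : ℚ) (i : Fin 3) (g : MvPolynomial (Fin 3) ℚ), g.IsHomogeneous n →
      X 1 * (C r * X i * g) ∈ gradedT A (2 + n) := by
    intro r i g hg
    have := z_mul A (ih (C r * X i * g) (((hX i).C_mul r).mul hg))
    rwa [← add_assoc] at this
  have hC2 : (C (2:ℚ) : MvPolynomial (Fin 3) ℚ) = 2 := rfl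
  refine gradedT_mul A (m := 2)
    (p := X 0 * (X 0 + C (A 1 0 : ℚ) * X 1 + C (A 2 0 : ℚ) * X 2) + C c * (X 2 * X 2))
    (p' := X 0 * X 0 + C c * (X 2 * (X 2 + C (A 0 2 : ℚ) * X 0 + C (A 1 2 : ℚ) * X 1)))
    le_rfl ?_ ?_ ?_ ?_ ?_ ?_ hf
  · rw [mem_fixed]
    simp [cartanSigma, cartanAlpha, Fin.sum_univ_three, h00, hC2, -map_intCast, -eq_intCast]
    ring
  · rw [mem_fixed]
    simp [cartanSigma, cartanAlpha, Fin.sum_univ_three, h22, hC2, -map_intCast, -eq_intCast]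
    left
    ring
  · exact ((hX 0).mul (((hX 0).add ((hX 1).C_mul _)).add ((hX 2).C_mul _))).add
      (((hX 2).mul (hX 2)).C_mul _)
  · exact ((hX 0).mul (hX 0)).add
      (((hX 2).mul (((hX 2).add ((hX 0).C_mul _)).add ((hX 1).C_mul _))).C_mul _)
  · intro g hg
    convert hz (-(A 1 0 : ℚ)) 0 g hg using 1
    rw [C_neg]
    ring
  · intro g hg
    convert hz (-(c * (A 1 2 : ℚ))) 2 g hg using 1
    rw [C_neg, C_mul, hcC]
    ring

lemma homog_mem (A : Matrix (Fin 3) (Fin 3) ℤ) (hA : IsGCM A) (hinf : 4 ≤ A 0 2 * A 2 0) (n : ℕ) :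
    ∀ f : MvPolynomial (Fin 3) ℚ, f.IsHomogeneous n → f ∈ gradedT A n := by
  induction n using Nat.strong_induction_on with
  | _ n ih =>
  have hX : ∀ (i : Fin 3) (k : ℕ), (X i ^ k : MvPolynomial (Fin 3) ℚ).IsHomogeneous k :=
    fun i k => isHomogeneous_X_pow i k
  have ha : (A 0 2 : ℚ) < 0 := by
    have h1 := hA.2.1 0 2 (by decide)
    have : A 0 2 ≠ 0 := by
      intro h
      rw [h] at hinf
      norm_num at hinf
    exact_mod_cast lt_of_le_of_ne h1 this
  have hb : (A 2 0 : ℚ) < 0 := by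
    have h1 := hA.2.1 2 0 (by decide)
    have : A 2 0 ≠ 0 := by
      intro h
      rw [h] at hinf
      norm_num at hinf
    exact_mod_cast lt_of_le_of_ne h1 this
  have hab : (4 : ℚ) ≤ A 0 2 * A 2 0 := by exact_mod_cast hinf
  obtain ⟨c, hc⟩ : ∃ c : ℚ, c * A 0 2 = A 2 0 := ⟨A 2 0 / A 0 2, div_mul_cancel₀ _ ha.ne⟩
  have hc0 : 0 < c := by
    by_contra h
    nlinarith
  have hd : 4 * c ≤ (-(A 2 0 : ℚ)) ^ 2 := by
    have := mul_le_mul_of_nonneg_left hab hc0.le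
    have e : c * (A 0 2 * A 2 0 : ℚ) = (-(A 2 0 : ℚ)) ^ 2 := by
      rw [← mul_assoc, hc]
      ring
    linarith
  have hw : ∀ k, k ≤ n → (X 0 ^ k * X 2 ^ (n - k) : MvPolynomial (Fin 3) ℚ) ∈ gradedT A n := by
    have h0 : (X 2 ^ n : MvPolynomial (Fin 3) ℚ) ∈ gradedT A n :=
      Submodule.mem_sup_left ⟨pow_fixed A (by decide) n, hX 2 n⟩
    have hn0 : (X 0 ^ n : MvPolynomial (Fin 3) ℚ) ∈ gradedT A n :=
      Submodule.mem_sup_right ⟨pow_fixed A (by decide) n, hX 0 n⟩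
    rcases Nat.eq_zero_or_pos n with hn | hn
    · intro k hk
      have : k = 0 := by omega
      subst this
      simpa using h0
    refine seq_mem (gradedT A n) (fun k => X 0 ^ k * X 2 ^ (n - k)) n (-(A 2 0 : ℚ)) c
      (by linarith) hc0.le hd hn (by simpa using h0) (by simpa using hn0) ?_
    intro k hk
    obtain ⟨m, rfl⟩ : ∃ m, n = 2 + (k + m) := ⟨n - 2 - k, by omega⟩
    have := q_mul A hA c hc (n := k + m) (ih _ (by omega))
      (ih (k + m) (by omega) (X 0 ^ k * X 2 ^ m) ((hX 0 k).mul (hX 2 m)))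
    convert this using 1
    have e0 : 2 + (k + m) - k = m + 2 := by omega
    have e1 : 2 + (k + m) - (k + 1) = m + 1 := by omega
    have e2 : 2 + (k + m) - (k + 2) = m := by omega
    simp only [e0, e1, e2, smul_eq_C_mul, C_neg]
    ring
  intro f hf
  rw [f.as_sum]
  refine Submodule.sum_mem _ fun d hd => ?_
  have hdeg : d 0 + d 1 + d 2 = n := by
    have := hf (mem_support_iff.1 hd)
    simpa [Finsupp.weight_apply, Finsupp.sum_fintype, Fin.sum_univ_three] using this
  have hm : monomial d (coeff d f) = coeff d f • (X 0 ^ d 0 * X 1 ^ d 1 * X 2 ^ d 2) := by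
    rw [monomial_eq, smul_eq_C_mul, Finsupp.prod_fintype _ _ (by simp), Fin.prod_univ_three]
  rw [hm]
  refine Submodule.smul_mem _ _ ?_
  rcases h1 : d 1 with _ | e
  · have := hw (d 0) (by omega)
    have e2 : n - d 0 = d 2 := by omega
    rw [e2] at this
    simpa using this
  · obtain ⟨m, rfl⟩ : ∃ m, n = 1 + m := ⟨n - 1, by omega⟩
    have hh : (X 0 ^ d 0 * X 1 ^ e * X 2 ^ d 2 : MvPolynomial (Fin 3) ℚ).IsHomogeneous m := by
      have := ((hX 0 (d 0)).mul (hX 1 e)).mul (hX 2 (d 2))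
      have e3 : d 0 + e + d 2 = m := by omega
      rwa [e3] at this
    have := z_mul A (ih m (by omega) _ hh)
    convert this using 1
    ring

lemma P1_sup_P3 (A : Matrix (Fin 3) (Fin 3) ℤ) (hA : IsGCM A) (hinf : 4 ≤ A 0 2 * A 2 0) :
    fixedSubmodule A ℚ 0 ⊔ fixedSubmodule A ℚ 2 = ⊤ := by
  rw [eq_top_iff]
  intro f _
  rw [← sum_homogeneousComponent f]
  refine Submodule.sum_mem _ fun n _ => ?_
  have := homog_mem A hA hinf n _ (homogeneousComponent_isHomogeneous n f)
  exact (sup_le_sup inf_le_left inf_le_left : gradedT A n ≤ _) this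

/-- Let `A` be a 3×3 generalized Cartan matrix with `a₁₃ a₃₁ ≥ 4`.  Then
`P₁ + (P₁₂ + P₃) = ℚ[ω₁,ω₂,ω₃]`, `P₁ ∩ (P₁₂ + P₃) = P₁₂ + P₁₃`, and the inclusion
`P₁ ⊆ ℚ[ω₁,ω₂,ω₃]` induces an isomorphism `P₁/(P₁₂+P₁₃) ≅ ℚ[ω₁,ω₂,ω₃]/(P₁₂+P₃)`:
the composite `P₁ → ℚ[ω₁,ω₂,ω₃] → ℚ[ω₁,ω₂,ω₃]/(P₁₂+P₃)` is surjective with kernel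
`P₁₂ + P₁₃`. -/
theorem P1_mod_P12_P13_iso (A : Matrix (Fin 3) (Fin 3) ℤ) (hA : IsGCM A)
    (hinf : 4 ≤ A 0 2 * A 2 0) :
    (fixedSubmodule A ℚ 0 ⊔
        ((fixedSubmodule A ℚ 0 ⊓ fixedSubmodule A ℚ 1) ⊔ fixedSubmodule A ℚ 2) = ⊤) ∧
    (fixedSubmodule A ℚ 0 ⊓
        ((fixedSubmodule A ℚ 0 ⊓ fixedSubmodule A ℚ 1) ⊔ fixedSubmodule A ℚ 2) =
      (fixedSubmodule A ℚ 0 ⊓ fixedSubmodule A ℚ 1) ⊔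
        (fixedSubmodule A ℚ 0 ⊓ fixedSubmodule A ℚ 2)) ∧
    (Function.Surjective
        (((fixedSubmodule A ℚ 0 ⊓ fixedSubmodule A ℚ 1) ⊔ fixedSubmodule A ℚ 2).mkQ ∘ₗ
          (fixedSubmodule A ℚ 0).subtype)) ∧
    (LinearMap.ker
        (((fixedSubmodule A ℚ 0 ⊓ fixedSubmodule A ℚ 1) ⊔ fixedSubmodule A ℚ 2).mkQ ∘ₗ
          (fixedSubmodule A ℚ 0).subtype) =
      Submodule.comap (fixedSubmodule A ℚ 0).subtype
        ((fixedSubmodule A ℚ 0 ⊓ fixedSubmodule A ℚ 1) ⊔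
          (fixedSubmodule A ℚ 0 ⊓ fixedSubmodule A ℚ 2))) := by
  have h1 : fixedSubmodule A ℚ 0 ⊔
        ((fixedSubmodule A ℚ 0 ⊓ fixedSubmodule A ℚ 1) ⊔ fixedSubmodule A ℚ 2) = ⊤ := by
    rw [eq_top_iff, ← P1_sup_P3 A hA hinf]
    exact sup_le_sup le_rfl le_sup_right
  have h2 : fixedSubmodule A ℚ 0 ⊓
        ((fixedSubmodule A ℚ 0 ⊓ fixedSubmodule A ℚ 1) ⊔ fixedSubmodule A ℚ 2) =
      (fixedSubmodule A ℚ 0 ⊓ fixedSubmodule A ℚ 1) ⊔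
        (fixedSubmodule A ℚ 0 ⊓ fixedSubmodule A ℚ 2) := by
    rw [inf_comm, sup_inf_assoc_of_le _ inf_le_left, inf_comm (fixedSubmodule A ℚ 2)]
  refine ⟨h1, h2, ?_, ?_⟩
  · intro y
    obtain ⟨f, rfl⟩ := Submodule.mkQ_surjective _ y
    obtain ⟨g, hg, h, hh, rfl⟩ := Submodule.mem_sup.1 (h1 ▸ Submodule.mem_top : f ∈ _)
    refine ⟨⟨g, hg⟩, ?_⟩
    rw [map_add]
    simpa using hh
  · rw [← h2, LinearMap.ker_comp, Submodule.ker_mkQ]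
    ext g
    simp
end

section
/- Let A = (a_ij) be a 2×2 generalized Cartan matrix with a₁₂·a₂₁ ≥ 4 (infinite type), and set ψ = a₁₂ω₁² + a₁₂a₂₁ω₁ω₂ + a₂₁ω₂² ∈ ℚ[ω₁,ω₂]. Then the subalgebra of ℚ[ω₁,ω₂] consisting of polynomials fixed by both σ₁ and σ₂ equals the ℚ-subalgebra generated by ψ. -/
open MvPolynomial

/-- The simple root `α_j = a₁ⱼω₁ + a₂ⱼω₂` viewed in `ℚ[ω₁,ω₂]`. -/
noncomputable def cartanAlpha₂ (A : Matrix (Fin 2) (Fin 2) ℤ) (j : Fin 2) :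
    MvPolynomial (Fin 2) ℚ :=
  ∑ i : Fin 2, (C ((A i j : ℤ) : ℚ)) * X i

/-- The simple reflection `σ_j` of `ℚ[ω₁,ω₂]`. -/
noncomputable def cartanSigma₂ (A : Matrix (Fin 2) (Fin 2) ℤ) (j : Fin 2) :
    MvPolynomial (Fin 2) ℚ →ₐ[ℚ] MvPolynomial (Fin 2) ℚ :=
  aeval (fun i => if i = j then X j - cartanAlpha₂ A j else X i)

/-- The Killing form `ψ = a₁₂ω₁² + a₁₂a₂₁ω₁ω₂ + a₂₁ω₂²`. -/
noncomputable def killingForm₂ (A : Matrix (Fin 2) (Fin 2) ℤ) : MvPolynomial (Fin 2) ℚ :=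
  C ((A 0 1 : ℤ) : ℚ) * X 0 ^ 2 + C (((A 0 1 * A 1 0 : ℤ)) : ℚ) * X 0 * X 1 +
    C ((A 1 0 : ℤ) : ℚ) * X 1 ^ 2

theorem even_poly_eq_expand (f : Polynomial ℚ) (h : ∀ x, f.eval (-x) = f.eval x) :
    ∃ g : Polynomial ℚ, ∀ x, f.eval x = g.eval (x ^ 2) := by
  have h1 : f.comp (Polynomial.C (-1) * Polynomial.X) = f := by
    apply Polynomial.funext
    intro x
    simp [h]
  have h2 : Polynomial.expand ℚ 2 (Polynomial.contract 2 f) = f := by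
    ext n
    rw [Polynomial.coeff_expand (by norm_num), Polynomial.coeff_contract (by norm_num)]
    split_ifs with hn
    · rw [Nat.div_mul_cancel hn]
    · have h3 := congrArg (fun p => Polynomial.coeff p n) h1
      have ho : Odd n := by
        rw [← Nat.not_even_iff_odd, even_iff_two_dvd]; exact hn
      simp only [Polynomial.comp_C_mul_X_coeff, ho.neg_one_pow] at h3
      linarith
  refine ⟨Polynomial.contract 2 f, fun x => ?_⟩
  conv_lhs => rw [← h2]
  rw [Polynomial.expand_eval]

theorem eval_sigma_zero (A : Matrix (Fin 2) (Fin 2) ℤ) (hA : A 0 0 = 2)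
    (q : MvPolynomial (Fin 2) ℚ) (x y : ℚ) :
    eval ![x, y] (cartanSigma₂ A 0 q) = eval ![-x - (A 1 0 : ℚ) * y, y] q := by
  unfold cartanSigma₂
  rw [← MvPolynomial.coe_aeval_eq_eval, ← MvPolynomial.coe_aeval_eq_eval]
  simp only [RingHom.coe_coe]
  rw [← AlgHom.comp_apply]
  congr 1
  ext i
  fin_cases i <;> simp [cartanAlpha₂, hA]
  ring

theorem eval_sigma_one (A : Matrix (Fin 2) (Fin 2) ℤ) (hA : A 1 1 = 2)
    (q : MvPolynomial (Fin 2) ℚ) (x y : ℚ) :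
    eval ![x, y] (cartanSigma₂ A 1 q) = eval ![x, -y - (A 0 1 : ℚ) * x] q := by
  unfold cartanSigma₂
  rw [← MvPolynomial.coe_aeval_eq_eval, ← MvPolynomial.coe_aeval_eq_eval]
  simp only [RingHom.coe_coe]
  rw [← AlgHom.comp_apply]
  congr 1
  ext i
  fin_cases i <;> simp [cartanAlpha₂, hA]
  ring

/-- The slopes of the lines in the orbit of the line `y = 0`. -/
def slopeSeq (a b : ℚ) : ℕ → ℚ
  | 0 => 0
  | n + 1 => (a - slopeSeq a b n) / (b * (a - slopeSeq a b n) - 1)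

theorem slopeSeq_inv (a b : ℚ) (ha : 0 < a) (hab : 4 ≤ a * b) (n : ℕ) :
    0 ≤ slopeSeq a b n ∧ slopeSeq a b n ≤ a / 2 ∧
      0 < b * slopeSeq a b n ^ 2 - a * b * slopeSeq a b n + a := by
  have hb : 0 < b := by
    by_contra hb
    nlinarith
  induction n with
  | zero => simp only [slopeSeq]; refine ⟨le_rfl, by positivity, by simpa using ha⟩
  | succ n ih =>
    obtain ⟨h0, h1, h2⟩ := ih
    simp only [slopeSeq]
    generalize slopeSeq a b n = m at *
    have hd : 0 < b * (a - m) - 1 := by nlinarith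
    refine ⟨div_nonneg (by linarith) hd.le, ?_, ?_⟩
    · rw [div_le_iff₀ hd]
      nlinarith [mul_nonneg (by linarith : 0 ≤ a / 2 - m) (by linarith : 0 ≤ a * b - 4)]
    · have : b * ((a - m) / (b * (a - m) - 1)) ^ 2 - a * b * ((a - m) / (b * (a - m) - 1)) + a
          = (b * m ^ 2 - a * b * m + a) / (b * (a - m) - 1) ^ 2 := by
        field_simp
        ring
      rw [this]
      positivity

theorem slopeSeq_den (a b : ℚ) (ha : 0 < a) (hab : 4 ≤ a * b) (n : ℕ) :
    0 < b * (a - slopeSeq a b n) - 1 := by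
  have hb : 0 < b := by
    by_contra hb
    nlinarith
  obtain ⟨h0, h1, h2⟩ := slopeSeq_inv a b ha hab n
  nlinarith

theorem slopeSeq_strictMono (a b : ℚ) (ha : 0 < a) (hab : 4 ≤ a * b) :
    StrictMono (slopeSeq a b) := by
  apply strictMono_nat_of_lt_succ
  intro n
  have hd := slopeSeq_den a b ha hab n
  obtain ⟨h0, h1, h2⟩ := slopeSeq_inv a b ha hab n
  simp only [slopeSeq]
  rw [lt_div_iff₀ hd]
  linarith

theorem eq_zero_of_slopes (r : MvPolynomial (Fin 2) ℚ) (m : ℕ → ℚ) (hm : Function.Injective m)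
    (h : ∀ n x, eval ![x, x * m n] r = 0) : r = 0 := by
  have key : ∀ x y : ℚ, x ≠ 0 → eval ![x, y] r = 0 := by
    intro x y hx
    let p : Polynomial ℚ := aeval ![Polynomial.C x, Polynomial.X] r
    have hp : ∀ t, p.eval t = eval ![x, t] r := by
      intro t
      rw [← Polynomial.coe_aeval_eq_eval, ← MvPolynomial.coe_aeval_eq_eval]
      simp only [RingHom.coe_coe, p]
      rw [← AlgHom.comp_apply]
      congr 1
      ext i
      fin_cases i <;> simp
    have hp0 : p = 0 := by
      apply Polynomial.eq_zero_of_infinite_isRoot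
      refine Set.Infinite.mono ?_ (Set.infinite_range_of_injective
        (f := fun n => x * m n) (fun i j hij => hm (mul_left_cancel₀ hx hij)))
      rintro _ ⟨n, rfl⟩
      simp [Polynomial.IsRoot, hp, h]
    rw [← hp, hp0, Polynomial.eval_zero]
  have h2 : X 0 * r = 0 := by
    apply MvPolynomial.funext
    intro v
    have hv : v = ![v 0, v 1] := by ext i; fin_cases i <;> rfl
    by_cases h0 : v 0 = 0
    · simp [h0]
    · have := key (v 0) (v 1) h0
      rw [← hv] at this
      simp [this]
  exact (mul_eq_zero.mp h2).resolve_left (X_ne_zero 0)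

theorem sigma_killing (A : Matrix (Fin 2) (Fin 2) ℤ) (hA : ∀ i, A i i = 2) (j : Fin 2) :
    cartanSigma₂ A j (killingForm₂ A) = killingForm₂ A := by
  apply MvPolynomial.funext
  intro v
  have hv : v = ![v 0, v 1] := by ext i; fin_cases i <;> rfl
  rw [hv]
  fin_cases j
  · change eval _ (cartanSigma₂ A 0 _) = _
    rw [eval_sigma_zero A (hA 0)]
    simp [killingForm₂]
    ring
  · change eval _ (cartanSigma₂ A 1 _) = _
    rw [eval_sigma_one A (hA 1)]
    simp [killingForm₂]
    ring

theorem aeval_smul_mem_adjoin (p : MvPolynomial (Fin 2) ℚ) (c : ℚ) (g : Polynomial ℚ) :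
    Polynomial.aeval (C c * p) g ∈ Algebra.adjoin ℚ {p} := by
  have hp : C c * p ∈ Algebra.adjoin ℚ {p} := by
    rw [← MvPolynomial.smul_eq_C_mul]
    exact Subalgebra.smul_mem _ (Algebra.subset_adjoin (Set.mem_singleton p)) c
  have hle : Algebra.adjoin ℚ {C c * p} ≤ Algebra.adjoin ℚ {p} :=
    Algebra.adjoin_le (Set.singleton_subset_iff.mpr hp)
  exact hle (Polynomial.aeval_mem_adjoin_singleton ℚ (C c * p))

/-- For a 2×2 generalized Cartan matrix of infinite type (`a₁₂ a₂₁ ≥ 4`), the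
subalgebra of `ℚ[ω₁,ω₂]` of polynomials fixed by both `σ₁` and `σ₂` is the
`ℚ`-subalgebra generated by the Killing form `ψ`. -/
theorem rank2_invariants_eq_adjoin_killing (A : Matrix (Fin 2) (Fin 2) ℤ)
    (hA : IsGCM A) (hinf : 4 ≤ A 0 1 * A 1 0) :
    {q : MvPolynomial (Fin 2) ℚ |
        cartanSigma₂ A 0 q = q ∧ cartanSigma₂ A 1 q = q} =
      ↑(Algebra.adjoin ℚ {killingForm₂ A}) := by
  obtain ⟨hd, hneg, -⟩ := hA
  have hadj : ∀ s ∈ Algebra.adjoin ℚ {killingForm₂ A}, ∀ j, cartanSigma₂ A j s = s := by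
    intro s hs j
    have hle : Algebra.adjoin ℚ {killingForm₂ A} ≤
        AlgHom.equalizer (cartanSigma₂ A j) (AlgHom.id ℚ _) := by
      apply Algebra.adjoin_le
      rintro _ rfl
      exact sigma_killing A hd j
    exact hle hs
  ext q
  constructor
  · rintro ⟨hq0, hq1⟩
    have h01 : A 0 1 < 0 := by
      rcases (hneg 0 1 (by decide)).lt_or_eq with h | h
      · exact h
      · rw [h] at hinf; simp at hinf
    obtain ⟨a, ha⟩ : ∃ a : ℚ, a = -(A 0 1 : ℚ) := ⟨_, rfl⟩
    obtain ⟨b, hb⟩ : ∃ b : ℚ, b = -(A 1 0 : ℚ) := ⟨_, rfl⟩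
    have ha0 : 0 < a := by
      rw [ha]; have : (A 0 1 : ℚ) < 0 := by exact_mod_cast h01
      linarith
    have hab : 4 ≤ a * b := by
      rw [ha, hb, neg_mul_neg]; exact_mod_cast hinf
    let f : Polynomial ℚ := aeval ![Polynomial.X, 0] q
    have hf : ∀ t, f.eval t = eval ![t, 0] q := by
      intro t
      rw [← Polynomial.coe_aeval_eq_eval, ← MvPolynomial.coe_aeval_eq_eval]
      simp only [RingHom.coe_coe, f]
      rw [← AlgHom.comp_apply]
      congr 1
      ext i
      fin_cases i <;> simp
    obtain ⟨g, hg⟩ := even_poly_eq_expand f (by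
      intro x
      rw [hf, hf]
      conv_rhs => rw [← hq0, eval_sigma_zero A (hd 0)]
      simp)
    let s : MvPolynomial (Fin 2) ℚ :=
      Polynomial.aeval (C (-a⁻¹) * killingForm₂ A) g
    have hs : s ∈ Algebra.adjoin ℚ {killingForm₂ A} := by
      exact aeval_smul_mem_adjoin _ _ _
    have hr0 : ∀ x, eval ![x, 0] (q - s) = 0 := by
      intro x
      have : eval ![x, 0] s = g.eval (x ^ 2) := by
        rw [← Polynomial.coe_aeval_eq_eval, ← MvPolynomial.coe_aeval_eq_eval]
        simp only [RingHom.coe_coe, s]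
        rw [← Polynomial.aeval_algHom_apply]
        congr 2
        have h' : (A 0 1 : ℚ) = -a := by rw [ha]; ring
        simp [killingForm₂, h']
        field_simp
      rw [map_sub, this, ← hf, hg, sub_self]
    have hr1 : cartanSigma₂ A 0 (q - s) = q - s := by rw [map_sub, hq0, hadj s hs]
    have hr2 : cartanSigma₂ A 1 (q - s) = q - s := by rw [map_sub, hq1, hadj s hs]
    have hz : q - s = 0 := by
      apply eq_zero_of_slopes _ (slopeSeq a b) (slopeSeq_strictMono a b ha0 hab).injective
      intro n
      induction n with
      | zero => intro x; simpa [slopeSeq] using hr0 x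
      | succ n ih =>
        intro x
        have hden := slopeSeq_den a b ha0 hab n
        rw [← ih (x / (b * (a - slopeSeq a b n) - 1))]
        conv_lhs => rw [← hr1, eval_sigma_zero A (hd 0), ← hr2, eval_sigma_one A (hd 1)]
        have h' : (A 0 1 : ℚ) = -a := by rw [ha]; ring
        have h'' : (A 1 0 : ℚ) = -b := by rw [hb]; ring
        rw [h', h'']
        simp only [slopeSeq]
        generalize slopeSeq a b n = m at *
        have e1 : -x - -b * (x * ((a - m) / (b * (a - m) - 1))) = x / (b * (a - m) - 1) := by
          field_simp
          ring
        rw [e1]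
        have e2 : -(x * ((a - m) / (b * (a - m) - 1))) - -a * (x / (b * (a - m) - 1))
            = x / (b * (a - m) - 1) * m := by
          field_simp
          ring
        rw [e2]
    rw [sub_eq_zero.mp hz]
    exact hs
  · intro hq
    exact ⟨hadj q hq 0, hadj q hq 1⟩
end

section
/- Let A be the 3×3 generalized Cartan matrix with rows (2, −1, −3), (−3, 2, −1), (−2, −4, 2). Over F₃, the subalgebra of F₃[ω₁,ω₂,ω₃] consisting of polynomials fixed by both σ₁ and σ₂ equals the F₃-subalgebra generated by ω₃, ω₁(ω₁+ω₃), and ω₂(ω₁+2ω₂+ω₃)(ω₁+ω₂)(ω₁+ω₂+2ω₃)(2ω₁+ω₂+ω₃)(ω₂+ω₃). -/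
open MvPolynomial

/-- The Cartan matrix with rows `(2,−1,−3)`, `(−3,2,−1)`, `(−2,−4,2)`. -/
def Amat : Matrix (Fin 3) (Fin 3) ℤ := !![2, -1, -3; -3, 2, -1; -2, -4, 2]

namespace P12

abbrev P := MvPolynomial (Fin 3) (ZMod 3)

/-- Set the variable `i` to zero. -/
noncomputable def ev (i : Fin 3) : P →ₐ[ZMod 3] P :=
  aeval (fun j => if j = i then 0 else X j)

lemma ev_X (i j : Fin 3) : ev i (X j) = if j = i then 0 else X j := by
  simp [ev]

noncomputable abbrev s0 : P →ₐ[ZMod 3] P := cartanSigma Amat (ZMod 3) 0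
noncomputable abbrev s1 : P →ₐ[ZMod 3] P := cartanSigma Amat (ZMod 3) 1

lemma three : (3 : P) = 0 := by
  have h : (3 : ZMod 3) = 0 := by decide
  have := congrArg (C : ZMod 3 →+* P) h
  rwa [map_ofNat, map_zero] at this

lemma C2 : (C (2 : ZMod 3) : P) = 2 := map_ofNat C 2

lemma alpha0 : cartanAlpha Amat (ZMod 3) 0 = (2 * X 0 + X 2 : P) := by
  have h := three
  simp [cartanAlpha, Fin.sum_univ_three, Amat]
  linear_combination (-X 1 - X 2) * h

lemma alpha1 : cartanAlpha Amat (ZMod 3) 1 = (2 * X 0 + 2 * X 1 + 2 * X 2 : P) := by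
  have h := three
  simp [cartanAlpha, Fin.sum_univ_three, Amat]
  linear_combination (-X 0 - 2 * X 2) * h

lemma s0_0 : s0 (X 0) = -X 0 - X 2 := by
  simp [s0, cartanSigma, alpha0]; ring
lemma s0_1 : s0 (X 1) = X 1 := by simp [s0, cartanSigma]
lemma s0_2 : s0 (X 2) = X 2 := by simp [s0, cartanSigma]
lemma s1_0 : s1 (X 0) = X 0 := by simp [s1, cartanSigma]
lemma s1_1 : s1 (X 1) = X 0 - X 1 + X 2 := by
  simp [s1, cartanSigma, alpha1]
  linear_combination (-X 0 - X 2) * three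
lemma s1_2 : s1 (X 2) = X 2 := by simp [s1, cartanSigma]

lemma s0_s0 (q : P) : s0 (s0 q) = q := by
  have : s0.comp s0 = AlgHom.id _ _ := by
    ext i : 1
    fin_cases i <;> simp [s0_0, s0_1, s0_2]
  exact DFunLike.congr_fun this q

lemma s1_s1 (q : P) : s1 (s1 q) = q := by
  have : s1.comp s1 = AlgHom.id _ _ := by
    ext i : 1
    fin_cases i <;> simp [s1_0, s1_1, s1_2]
    ring
  exact DFunLike.congr_fun this q

lemma prime_s0 {p : P} (h : Prime p) : Prime (s0 p) := by
  let e : P ≃ₐ[ZMod 3] P := AlgEquiv.ofAlgHom s0 s0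
    (AlgHom.ext s0_s0) (AlgHom.ext s0_s0)
  exact (MulEquiv.prime_iff e).2 h

lemma prime_s1 {p : P} (h : Prime p) : Prime (s1 p) := by
  let e : P ≃ₐ[ZMod 3] P := AlgEquiv.ofAlgHom s1 s1
    (AlgHom.ext s1_s1) (AlgHom.ext s1_s1)
  exact (MulEquiv.prime_iff e).2 h

lemma X_dvd_sub (i : Fin 3) (q : P) : X i ∣ q - ev i q := by
  induction q using MvPolynomial.induction_on with
  | C a => simp [ev]
  | add p q hp hq =>
    rw [map_add]
    convert dvd_add hp hq using 1
    ring
  | mul_X p j hp =>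
    rw [map_mul, ev_X]
    split_ifs with h
    · subst h; simp
    · rw [← sub_mul]; exact hp.mul_right _

lemma degreeOf_ev (i : Fin 3) (q : P) : degreeOf i (ev i q) = 0 := by
  induction q using MvPolynomial.induction_on with
  | C a => simp [ev, algebraMap_eq, degreeOf_C]
  | add p q hp hq =>
    rw [map_add]
    have := degreeOf_add_le i (ev i p) (ev i q)
    omega
  | mul_X p j hp =>
    rw [map_mul, ev_X]
    split_ifs with h
    · simp
    · have := degreeOf_mul_le i (ev i p) (X j)
      rw [degreeOf_X_of_ne (Ne.symm h)] at this
      omega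

/-- The quotient of `q - ev i q` by a multiple of `X i` has smaller degree. -/
lemma degree_lt (i : Fin 3) (q g h : P) (hg : g ≠ 0) (hh : h ≠ 0)
    (e : q - ev i q = X i * g * h) : degreeOf i h < degreeOf i q := by
  have h1 := degreeOf_sub_le i q (ev i q)
  rw [e, degreeOf_mul_eq (mul_ne_zero (X_ne_zero i) hg) hh,
    degreeOf_mul_eq (X_ne_zero i) hg, degreeOf_X_self, degreeOf_ev] at h1
  omega

lemma dvd_step {a p r : P} (hp : Prime p) (ha : ¬ p ∣ a) (h1 : a ∣ r) (h2 : p ∣ r) :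
    a * p ∣ r := by
  obtain ⟨c, rfl⟩ := h1
  exact mul_dvd_mul_left _ ((hp.dvd_or_dvd h2).resolve_left ha)

lemma not_dvd_of_eval {a b : P}
    (h : ∃ x y z : ZMod 3, eval ![x, y, z] a = 0 ∧ eval ![x, y, z] b ≠ 0) : ¬ a ∣ b := by
  rintro ⟨c, rfl⟩
  obtain ⟨x, y, z, h1, h2⟩ := h
  simp [h1] at h2

noncomputable def f : P := X 1 * (X 0 + C 2 * X 1 + X 2) * (X 0 + X 1) *
  (X 0 + X 1 + C 2 * X 2) * (C 2 * X 0 + X 1 + X 2) * (X 1 + X 2)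

noncomputable def g : P := X 0 * (X 0 + X 2)

/-- The six linear forms of the orbit of `X 1`. -/
lemma e1 : s1 (X 1) = (X 0 + C 2 * X 1 + X 2 : P) := by
  rw [s1_1, C2]; linear_combination (-X 1) * three
lemma e2 : s0 (X 0 + C 2 * X 1 + X 2 : P) = -(X 0 + X 1) := by
  simp only [map_add, map_mul, C2, map_ofNat, s0_0, s0_1, s0_2]
  linear_combination (X 1) * three
lemma e3 : s1 (X 0 + X 1 : P) = -(X 0 + X 1 + C 2 * X 2) := by
  simp only [map_add, map_mul, C2, map_ofNat, s1_0, s1_1, s1_2]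
  linear_combination (X 0 + X 2) * three
lemma e4 : s0 (X 0 + X 1 + C 2 * X 2 : P) = C 2 * X 0 + X 1 + X 2 := by
  simp only [map_add, map_mul, C2, map_ofNat, s0_0, s0_1, s0_2]
  linear_combination (-X 0) * three
lemma e5 : s1 (C 2 * X 0 + X 1 + X 2 : P) = -(X 1 + X 2) := by
  simp only [map_add, map_mul, C2, map_ofNat, s1_0, s1_1, s1_2]
  linear_combination (X 0 + X 2) * three
lemma e6 : s0 (X 1 + X 2 : P) = X 1 + X 2 := by
  simp only [map_add, s0_1, s0_2]

lemma s0_f : s0 f = f := by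
  have h2 := congrArg s0 e2
  have h4 := congrArg s0 e4
  rw [s0_s0] at h2 h4
  rw [map_neg] at h2
  have h2' : s0 (X 0 + X 1 : P) = -(X 0 + C 2 * X 1 + X 2) := by
    linear_combination h2
  rw [f, map_mul, map_mul, map_mul, map_mul, map_mul, e6, ← h4, e4, e2, h2', s0_1]
  ring

lemma s1_f : s1 f = f := by
  have h1 := congrArg s1 e1
  have h3 := congrArg s1 e3
  have h5 := congrArg s1 e5
  rw [s1_s1] at h1 h3 h5
  rw [map_neg] at h3 h5
  have h3' : s1 (X 0 + X 1 + C 2 * X 2 : P) = -(X 0 + X 1) := by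
    linear_combination h3
  have h5' : s1 (X 1 + X 2 : P) = -(C 2 * X 0 + X 1 + X 2) := by
    linear_combination h5
  rw [f, map_mul, map_mul, map_mul, map_mul, map_mul, e1, ← h1, e3, h3', e5, h5']
  ring

lemma s0_g : s0 g = g := by
  simp only [g, map_add, map_mul, s0_0, s0_2]; ring
lemma s1_g : s1 g = g := by
  simp only [g, map_add, map_mul, s1_0, s1_2]

lemma prime_x (i : Fin 3) : Prime (X i : P) := by
  exact X_prime

lemma p1 : Prime (X 0 + C 2 * X 1 + X 2 : P) := e1 ▸ prime_s1 (prime_x 1)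
lemma p2 : Prime (X 0 + X 1 : P) := by
  have := prime_s0 p1
  rw [e2] at this
  simpa using this.neg
lemma p3 : Prime (X 0 + X 1 + C 2 * X 2 : P) := by
  have := prime_s1 p2
  rw [e3] at this
  simpa only [neg_neg] using this.neg
lemma p4 : Prime (C 2 * X 0 + X 1 + X 2 : P) := e4 ▸ prime_s0 p3
lemma p5 : Prime (X 1 + X 2 : P) := by
  have := prime_s1 p4
  rw [e5] at this
  simpa only [neg_neg] using this.neg
lemma pg : Prime (X 0 + X 2 : P) := by
  have := prime_s0 (prime_x 0)
  rw [s0_0] at this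
  convert this.neg using 1
  ring

lemma s_dvd {s : P →ₐ[ZMod 3] P} {a r : P} (hr : s r = r) (h : a ∣ r) : s a ∣ r := by
  have := map_dvd s h
  rwa [hr] at this

lemma f_dvd {r : P} (h0 : s0 r = r) (h1 : s1 r = r) (h : X 1 ∣ r) : f ∣ r := by
  have d1 := s_dvd h1 h
  rw [e1] at d1
  have d2 := s_dvd h0 d1
  rw [e2, neg_dvd] at d2
  have d3 := s_dvd h1 d2
  rw [e3, neg_dvd] at d3
  have d4 := s_dvd h0 d3
  rw [e4] at d4
  have d5 := s_dvd h1 d4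
  rw [e5, neg_dvd] at d5
  refine dvd_step p5 ?_ (dvd_step p4 ?_ (dvd_step p3 ?_ (dvd_step p2 ?_
    (dvd_step p1 ?_ h d1) d2) d3) d4) d5
  · simp only [p5.dvd_mul, not_or]
    refine ⟨⟨⟨⟨?_, ?_⟩, ?_⟩, ?_⟩, ?_⟩ <;>
    · apply not_dvd_of_eval; simp only [map_add, map_mul, eval_X, eval_C]; decide
  · simp only [p4.dvd_mul, not_or]
    refine ⟨⟨⟨?_, ?_⟩, ?_⟩, ?_⟩ <;>
    · apply not_dvd_of_eval; simp only [map_add, map_mul, eval_X, eval_C]; decide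
  · simp only [p3.dvd_mul, not_or]
    refine ⟨⟨?_, ?_⟩, ?_⟩ <;>
    · apply not_dvd_of_eval; simp only [map_add, map_mul, eval_X, eval_C]; decide
  · simp only [p2.dvd_mul, not_or]
    refine ⟨?_, ?_⟩ <;>
    · apply not_dvd_of_eval; simp only [map_add, map_mul, eval_X, eval_C]; decide
  · apply not_dvd_of_eval; simp only [map_add, map_mul, eval_X, eval_C]; decide

lemma g_dvd {r : P} (h0 : s0 r = r) (h : X 0 ∣ r) : g ∣ r := by
  have d1 := s_dvd h0 h
  have : -X 0 - X 2 = -(X 0 + X 2 : P) := by ring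
  rw [s0_0, this, neg_dvd] at d1
  refine dvd_step pg ?_ h d1
  apply not_dvd_of_eval; simp only [map_add, eval_X]; decide

lemma f_ne : f ≠ 0 := by
  unfold f
  exact mul_ne_zero (mul_ne_zero (mul_ne_zero (mul_ne_zero (mul_ne_zero (prime_x 1).ne_zero
    p1.ne_zero) p2.ne_zero) p3.ne_zero) p4.ne_zero) p5.ne_zero

lemma g_ne : g ≠ 0 := mul_ne_zero (prime_x 0).ne_zero pg.ne_zero

noncomputable abbrev S : Subalgebra (ZMod 3) P := Algebra.adjoin (ZMod 3) {X 2, g, f}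

lemma X2_mem : (X 2 : P) ∈ S := Algebra.subset_adjoin (by simp)
lemma g_mem : g ∈ S := Algebra.subset_adjoin (by simp)
lemma f_mem : f ∈ S := Algebra.subset_adjoin (by simp)

lemma ev_ev_mem (q : P) : ev 0 (ev 1 q) ∈ S := by
  induction q using MvPolynomial.induction_on with
  | C a => simpa [ev] using S.algebraMap_mem a
  | add p q hp hq => simpa using add_mem hp hq
  | mul_X p j hp =>
    rw [map_mul, map_mul]
    refine mul_mem hp ?_
    fin_cases j
    · simp [ev_X]
    · simp [ev_X]
    · simpa [ev_X] using X2_mem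

lemma s0_ev_ev (q : P) : s0 (ev 0 (ev 1 q)) = ev 0 (ev 1 q) := by
  have : s0.comp ((ev 0).comp (ev 1)) = (ev 0).comp (ev 1) := by
    ext i : 1
    fin_cases i <;> simp [ev_X, s0_2]
  exact DFunLike.congr_fun this q

lemma ev1_ev_ev (q : P) : ev 1 (ev 0 (ev 1 q)) = ev 0 (ev 1 q) := by
  have : (ev 1).comp ((ev 0).comp (ev 1)) = (ev 0).comp (ev 1) := by
    ext i : 1
    fin_cases i <;> simp [ev_X]
  exact DFunLike.congr_fun this q

lemma s0_ev1 (q : P) : s0 (ev 1 q) = ev 1 (s0 q) := by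
  have : s0.comp (ev 1) = (ev 1).comp s0 := by
    ext i : 1
    fin_cases i <;> simp [ev_X, s0_0, s0_1, s0_2]
  exact DFunLike.congr_fun this q

lemma s1_ev1 (q : P) : s1 (ev 1 q) = ev 1 q := by
  have : s1.comp (ev 1) = ev 1 := by
    ext i : 1
    fin_cases i <;> simp [ev_X, s1_0, s1_2]
  exact DFunLike.congr_fun this q

lemma ev1_ev1 (q : P) : ev 1 (ev 1 q) = ev 1 q := by
  have : (ev 1).comp (ev 1) = ev 1 := by
    ext i : 1
    fin_cases i <;> simp [ev_X]
  exact DFunLike.congr_fun this q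

lemma ev1_g : ev 1 g = g := by simp [g, ev_X]

lemma mem_two (n : ℕ) : ∀ q : P, degreeOf 0 q ≤ n → s0 q = q → ev 1 q = q → q ∈ S := by
  induction n using Nat.strong_induction_on with
  | _ n ih =>
  intro q hn h0 h1
  have k0 : s0 (ev 0 q) = ev 0 q := by rw [← h1]; exact s0_ev_ev q
  have k1 : ev 1 (ev 0 q) = ev 0 q := by
    have := ev1_ev_ev q
    rwa [h1] at this
  have km : ev 0 q ∈ S := by
    have := ev_ev_mem q
    rwa [h1] at this
  obtain ⟨h, hh⟩ := g_dvd (r := q - ev 0 q) (by rw [map_sub, h0, k0]) (X_dvd_sub 0 q)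
  have hq : q = ev 0 q + g * h := by rw [← hh]; ring
  rw [hq]
  refine add_mem km (mul_mem g_mem ?_)
  by_cases hz : h = 0
  · rw [hz]; exact zero_mem _
  have hlt := degree_lt 0 q _ h pg.ne_zero hz hh
  refine ih (degreeOf 0 h) (by omega) h le_rfl ?_ ?_
  · have := congrArg s0 hh
    rw [map_sub, h0, k0, hh, map_mul, s0_g] at this
    exact (mul_left_cancel₀ g_ne this).symm
  · have := congrArg (ev 1) hh
    rw [map_sub, h1, k1, hh, map_mul, ev1_g] at this
    exact (mul_left_cancel₀ g_ne this).symm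

lemma mem_three (n : ℕ) : ∀ q : P, degreeOf 1 q ≤ n → s0 q = q → s1 q = q → q ∈ S := by
  induction n using Nat.strong_induction_on with
  | _ n ih =>
  intro q hn h0 h1
  have k0 : s0 (ev 1 q) = ev 1 q := by rw [s0_ev1, h0]
  have k1 : s1 (ev 1 q) = ev 1 q := s1_ev1 q
  have km : ev 1 q ∈ S := mem_two _ _ le_rfl k0 (ev1_ev1 q)
  obtain ⟨h, hh⟩ := f_dvd (r := q - ev 1 q) (by rw [map_sub, h0, k0])
    (by rw [map_sub, h1, k1]) (X_dvd_sub 1 q)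
  have hq : q = ev 1 q + f * h := by rw [← hh]; ring
  rw [hq]
  refine add_mem km (mul_mem f_mem ?_)
  by_cases hz : h = 0
  · rw [hz]; exact zero_mem _
  have hlt := degree_lt 1 q ((X 0 + C 2 * X 1 + X 2) * (X 0 + X 1) *
    (X 0 + X 1 + C 2 * X 2) * (C 2 * X 0 + X 1 + X 2) * (X 1 + X 2)) h
    (mul_ne_zero (mul_ne_zero (mul_ne_zero (mul_ne_zero
    p1.ne_zero p2.ne_zero) p3.ne_zero) p4.ne_zero) p5.ne_zero) hz (by rw [hh, f]; ring)
  refine ih (degreeOf 1 h) (by omega) h le_rfl ?_ ?_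
  · have := congrArg s0 hh
    rw [map_sub, h0, k0, hh, map_mul, s0_f] at this
    exact (mul_left_cancel₀ f_ne this).symm
  · have := congrArg s1 hh
    rw [map_sub, h1, k1, hh, map_mul, s1_f] at this
    exact (mul_left_cancel₀ f_ne this).symm

lemma le_fixed (s : P →ₐ[ZMod 3] P) (h2 : s (X 2) = X 2) (hg : s g = g) (hf : s f = f) :
    S ≤ AlgHom.equalizer s (AlgHom.id (ZMod 3) P) := by
  refine Algebra.adjoin_le ?_
  rintro q (rfl | rfl | rfl)
  · exact h2
  · exact hg
  · exact hf

end P12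

/-- For the stated Cartan matrix `A`, the subalgebra of `𝔽₃[ω₁,ω₂,ω₃]` of
polynomials fixed by both `σ₁` and `σ₂` is generated by `ω₃`, `ω₁(ω₁+ω₃)` and
`ω₂(ω₁+2ω₂+ω₃)(ω₁+ω₂)(ω₁+ω₂+2ω₃)(2ω₁+ω₂+ω₃)(ω₂+ω₃)`. -/
theorem mod3_P12_eq_adjoin :
    {q : MvPolynomial (Fin 3) (ZMod 3) |
        cartanSigma Amat (ZMod 3) 0 q = q ∧ cartanSigma Amat (ZMod 3) 1 q = q} =
      ↑(Algebra.adjoin (ZMod 3)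
        ({X 2, X 0 * (X 0 + X 2),
          X 1 * (X 0 + C 2 * X 1 + X 2) * (X 0 + X 1) * (X 0 + X 1 + C 2 * X 2) *
            (C 2 * X 0 + X 1 + X 2) * (X 1 + X 2)} :
          Set (MvPolynomial (Fin 3) (ZMod 3)))) := by
  ext q
  constructor
  · rintro ⟨h0, h1⟩
    exact P12.mem_three _ q le_rfl h0 h1
  · intro h
    exact ⟨P12.le_fixed _ P12.s0_2 P12.s0_g P12.s0_f h,
      P12.le_fixed _ P12.s1_2 P12.s1_g P12.s1_f h⟩
end

section
/- Let A be the 3×3 generalized Cartan matrix with rows (2, −1, −3), (−3, 2, −1), (−2, −4, 2). For j = 1,2,3 let A_j be the 3×3 matrix obtained from A by replacing every entry outside the j-th column by 0, and let M_j = I₃ − A_j, with entries reduced modulo 3. Then each M_j is invertible over F₃ and the subgroup of GL(3, F₃) generated by M₁, M₂, M₃ is all of GL(3, F₃). -/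
open Matrix

/-- `M_j = I₃ − A_j` over `𝔽₃`, where `A_j` is obtained from `A` by replacing all
entries outside the `j`-th column by `0`: the matrix of the simple reflection
`σ_j` in the basis `(ω₁, ω₂, ω₃)`. -/
def reflMatrix (j : Fin 3) : Matrix (Fin 3) (Fin 3) (ZMod 3) :=
  fun i k => (if i = k then 1 else 0) - (if k = j then ((Amat i k : ℤ) : ZMod 3) else 0)

/-- A submonoid of matrices containing the three reflections contains every matrix of
nonzero determinant: it contains the elementary transvections and sign changes. -/
theorem mem_of_reflections (S : Submonoid (Matrix (Fin 3) (Fin 3) (ZMod 3)))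
    (h : ∀ j, reflMatrix j ∈ S) (M : Matrix (Fin 3) (Fin 3) (ZMod 3)) (hM : M.det ≠ 0) :
    M ∈ S := by
  have step : ∀ {X Y Z : Matrix (Fin 3) (Fin 3) (ZMod 3)}, X ∈ S → Y ∈ S → X * Y = Z → Z ∈ S := by
    intro X Y Z hX hY hZ
    exact hZ ▸ S.mul_mem hX hY
  have r0 : !![2,0,0;0,1,0;2,0,1] ∈ S := by
    have e : reflMatrix 0 = !![2,0,0;0,1,0;2,0,1] := by decide
    exact e ▸ h 0
  have r1 : !![1,1,0;0,2,0;0,1,1] ∈ S := by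
    have e : reflMatrix 1 = !![1,1,0;0,2,0;0,1,1] := by decide
    exact e ▸ h 1
  have r2 : !![1,0,0;0,1,1;0,0,2] ∈ S := by
    have e : reflMatrix 2 = !![1,0,0;0,1,1;0,0,2] := by decide
    exact e ▸ h 2
  have x0 : !![1,1,1;0,2,2;0,1,0] ∈ S := step r1 r2 (by decide)
  have x1 : !![1,1,1;0,0,2;0,2,0] ∈ S := step x0 r1 (by decide)
  have x2 : !![1,1,1;1,0,2;0,2,0] ∈ S := step x1 r0 (by decide)
  have x3 : !![1,1,1;1,0,2;0,1,0] ∈ S := step x2 r1 (by decide)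
  have x4 : !![1,1,1;0,0,2;0,1,0] ∈ S := step x3 r0 (by decide)
  have x5 : !![1,1,0;0,0,1;0,1,1] ∈ S := step x4 r2 (by decide)
  have e12 : !![1,0,0;0,1,1;0,0,1] ∈ S := step x5 r1 (by decide)
  have e22 : !![1,0,0;0,1,0;0,0,2] ∈ S := step x4 x1 (by decide)
  have x6 : !![1,1,0;0,0,1;0,1,2] ∈ S := step r1 x4 (by decide)
  have x7 : !![1,0,0;0,1,0;0,1,2] ∈ S := step x6 x0 (by decide)
  have e21 : !![1,0,0;0,1,0;0,1,1] ∈ S := step x7 e22 (by decide)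
  have x8 : !![1,1,0;0,1,0;0,2,1] ∈ S := step r2 x6 (by decide)
  have e01 : !![1,1,0;0,1,0;0,0,1] ∈ S := step x8 e21 (by decide)
  have x9 : !![1,2,0;0,2,0;0,0,1] ∈ S := step r1 x8 (by decide)
  have e11 : !![1,0,0;0,2,0;0,0,1] ∈ S := step x9 e01 (by decide)
  have x10 : !![1,2,2;0,2,1;0,1,0] ∈ S := step x4 x7 (by decide)
  have e02 : !![1,0,1;0,1,0;0,0,1] ∈ S := step x10 x5 (by decide)
  have x11 : !![1,1,2;1,0,0;0,1,0] ∈ S := step x3 e02 (by decide)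
  have e10 : !![1,0,0;1,1,0;0,0,1] ∈ S := step x11 x5 (by decide)
  have x12 : !![2,0,0;2,1,1;1,0,2] ∈ S := step r2 r0 (by decide)
  have x13 : !![2,2,1;0,0,1;1,0,2] ∈ S := step x12 x11 (by decide)
  have e20 : !![1,0,0;0,1,0;1,0,1] ∈ S := step x13 x3 (by decide)
  have e00 : !![2,0,0;0,1,0;0,0,1] ∈ S := step r0 e20 (by decide)
  have tr : ∀ i j : Fin 3, i ≠ j → transvection i j (1 : ZMod 3) ∈ S := by
    intro i j hij
    fin_cases i <;> fin_cases j <;> first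
      | exact absurd rfl hij
      | exact step S.one_mem e01 (by decide)
      | exact step S.one_mem e02 (by decide)
      | exact step S.one_mem e10 (by decide)
      | exact step S.one_mem e12 (by decide)
      | exact step S.one_mem e20 (by decide)
      | exact step S.one_mem e21 (by decide)
  have sg : ∀ (i : Fin 3) (c : ZMod 3), c ≠ 0 → diagonal (Function.update 1 i c) ∈ S := by
    intro i c hc
    have hc' : c = 1 ∨ c = 2 := by revert c; decide
    rcases hc' with rfl | rfl
    · have : diagonal (Function.update (1 : Fin 3 → ZMod 3) i 1) = 1 := by
        revert i; decide
      exact this ▸ S.one_mem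
    · fin_cases i
      · exact step S.one_mem e00 (by decide)
      · exact step S.one_mem e11 (by decide)
      · exact step S.one_mem e22 (by decide)
  refine diagonal_transvection_induction_of_det_ne_zero (fun X => X ∈ S) M hM ?_ ?_ ?_
  · intro D hD
    rw [det_diagonal, Finset.prod_ne_zero_iff] at hD
    have e : diagonal D = diagonal (Function.update 1 0 (D 0)) *
        diagonal (Function.update 1 1 (D 1)) * diagonal (Function.update 1 2 (D 2)) := by
      rw [diagonal_mul_diagonal, diagonal_mul_diagonal]
      congr 1
      funext i
      fin_cases i <;> simp [Function.update]
    rw [e]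
    exact S.mul_mem (S.mul_mem (sg 0 _ (hD 0 (by simp))) (sg 1 _ (hD 1 (by simp))))
      (sg 2 _ (hD 2 (by simp)))
  · rintro ⟨i, j, hij, c⟩
    change transvection i j c ∈ S
    have hc : c = 0 ∨ c = 1 ∨ c = 1 + 1 := by revert c; decide
    rcases hc with rfl | rfl | rfl
    · rw [transvection_zero]
      exact S.one_mem
    · exact tr i j hij
    · rw [← transvection_mul_transvection_same i j hij]
      exact S.mul_mem (tr i j hij) (tr i j hij)
  · intro A B _ _ hA hB
    exact S.mul_mem hA hB

/-- For the stated Cartan matrix, the matrices `M₁, M₂, M₃` of the simple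
reflections are invertible over `𝔽₃` and generate all of `GL(3, 𝔽₃)`. -/
theorem reflections_generate_GL3_F3 :
    ∃ u : Fin 3 → Matrix.GeneralLinearGroup (Fin 3) (ZMod 3),
      (∀ j, ((u j : Matrix (Fin 3) (Fin 3) (ZMod 3))) = reflMatrix j) ∧
      Subgroup.closure (Set.range u) = ⊤ := by
  have hsq : ∀ j, reflMatrix j * reflMatrix j = 1 := by decide
  let u : Fin 3 → Matrix.GeneralLinearGroup (Fin 3) (ZMod 3) := fun j =>
    ⟨reflMatrix j, reflMatrix j, hsq j, hsq j⟩
  refine ⟨u, fun j => rfl, ?_⟩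
  rw [eq_top_iff]
  intro g _
  have hg : (g : Matrix (Fin 3) (Fin 3) (ZMod 3)) ∈
      (Subgroup.closure (Set.range u)).toSubmonoid.map (Units.coeHom _) := by
    refine mem_of_reflections _ (fun j => ?_) _ ?_
    · exact ⟨u j, Subgroup.subset_closure ⟨j, rfl⟩, rfl⟩
    · exact ((Matrix.isUnit_iff_isUnit_det _).mp g.isUnit).ne_zero
  obtain ⟨g', hg', e⟩ := hg
  have : g' = g := Units.ext e
  exact this ▸ hg'
end

section
/- Let A be the 3×3 generalized Cartan matrix with rows (2, −1, −3), (−3, 2, −1), (−2, −4, 2). Over F₂, the subalgebra of F₂[ω₁,ω₂,ω₃] consisting of polynomials fixed by all three automorphisms σ₁, σ₂, σ₃ equals the F₂-subalgebra generated by ω₁² + ω₂² + ω₁ω₂, ω₁ω₂(ω₁+ω₂), and ω₃(ω₁+ω₂+ω₃)(ω₂+ω₃)(ω₁+ω₃). -/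
open MvPolynomial

abbrev PP := MvPolynomial (Fin 3) (ZMod 2)

noncomputable def s0 : PP →ₐ[ZMod 2] PP := aeval ![X 0 + X 1, X 1, X 2]
noncomputable def s1 : PP →ₐ[ZMod 2] PP := aeval ![X 0, X 0 + X 1, X 2]
noncomputable def s2 : PP →ₐ[ZMod 2] PP := aeval ![X 0, X 1, X 0 + X 1 + X 2]
noncomputable def zz : PP →ₐ[ZMod 2] PP := aeval ![X 0, X 1, 0]
noncomputable def ph : PP →ₐ[ZMod 2] Polynomial (ZMod 2) := aeval ![Polynomial.X, 0, 0]

@[simp] lemma s0_0 : s0 (X 0) = X 0 + X 1 := by simp [s0]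
@[simp] lemma s0_1 : s0 (X 1) = X 1 := by simp [s0]
@[simp] lemma s0_2 : s0 (X 2) = X 2 := by simp [s0]
@[simp] lemma s1_0 : s1 (X 0) = X 0 := by simp [s1]
@[simp] lemma s1_1 : s1 (X 1) = X 0 + X 1 := by simp [s1]
@[simp] lemma s1_2 : s1 (X 2) = X 2 := by simp [s1]
@[simp] lemma s2_0 : s2 (X 0) = X 0 := by simp [s2]
@[simp] lemma s2_1 : s2 (X 1) = X 1 := by simp [s2]
@[simp] lemma s2_2 : s2 (X 2) = X 0 + X 1 + X 2 := by simp [s2]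
@[simp] lemma zz_0 : zz (X 0) = X 0 := by simp [zz]
@[simp] lemma zz_1 : zz (X 1) = X 1 := by simp [zz]
@[simp] lemma zz_2 : zz (X 2) = 0 := by simp [zz]
@[simp] lemma ph_0 : ph (X 0) = Polynomial.X := by simp [ph]
@[simp] lemma ph_1 : ph (X 1) = 0 := by simp [ph]
@[simp] lemma ph_2 : ph (X 2) = 0 := by simp [ph]

lemma two0 : (2 : PP) = 0 := CharTwo.two_eq_zero
lemma two0Z : (2 : ZMod 2) = 0 := by decide

lemma hsig0 : cartanSigma Amat (ZMod 2) 0 = s0 := by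
  apply MvPolynomial.algHom_ext
  intro i
  have h3 : (3 : PP) = 1 := by linear_combination two0
  have h2 := two0Z
  fin_cases i <;> simp [cartanSigma, cartanAlpha, Amat, Fin.sum_univ_three, h2]
  all_goals try linear_combination (X 1 - X 0 + X 2) * two0
lemma hsig1 : cartanSigma Amat (ZMod 2) 1 = s1 := by
  apply MvPolynomial.algHom_ext
  intro i
  have h4 : (4 : ZMod 2) = 0 := by decide
  have h2 := two0Z
  fin_cases i <;> simp [cartanSigma, cartanAlpha, Amat, Fin.sum_univ_three, h2, h4]
  all_goals try linear_combination (2 * X 2 - X 1) * two0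
lemma hsig2 : cartanSigma Amat (ZMod 2) 2 = s2 := by
  apply MvPolynomial.algHom_ext
  intro i
  have h2 := two0Z
  fin_cases i <;> simp [cartanSigma, cartanAlpha, Amat, Fin.sum_univ_three, h2]
  all_goals try linear_combination (X 0 - X 2) * two0

lemma s0s0 (f : PP) : s0 (s0 f) = f := by
  have : s0.comp s0 = AlgHom.id _ _ := by
    apply MvPolynomial.algHom_ext
    intro i
    fin_cases i <;> simp
    linear_combination (X 1) * two0
  exact DFunLike.congr_fun this f
lemma s1s1 (f : PP) : s1 (s1 f) = f := by
  have : s1.comp s1 = AlgHom.id _ _ := by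
    apply MvPolynomial.algHom_ext
    intro i
    fin_cases i <;> simp
    linear_combination (X 0) * two0
  exact DFunLike.congr_fun this f
lemma s2s2 (f : PP) : s2 (s2 f) = f := by
  have : s2.comp s2 = AlgHom.id _ _ := by
    apply MvPolynomial.algHom_ext
    intro i
    fin_cases i <;> simp
    linear_combination (X 0 + X 1) * two0
  exact DFunLike.congr_fun this f

lemma prime_inv (s : PP →ₐ[ZMod 2] PP) (h : ∀ f, s (s f) = f) (p : PP) (hp : Prime p) :
    Prime (s p) := by
  have e : s.comp s = AlgHom.id _ _ := AlgHom.ext h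
  exact (MulEquiv.prime_iff (AlgEquiv.ofAlgHom s s e e)).2 hp

lemma dvd_sub_aeval {d : PP} (φ : Fin 3 → PP) (h : ∀ i, d ∣ X i - φ i) (f : PP) :
    d ∣ f - aeval φ f := by
  induction f using MvPolynomial.induction_on with
  | C a => simp
  | add p q hp hq =>
    rw [map_add]
    convert dvd_add hp hq using 1
    ring
  | mul_X p i hp =>
    rw [map_mul, aeval_X]
    have : p * X i - aeval φ p * φ i = (p - aeval φ p) * X i + aeval φ p * (X i - φ i) := by ring
    rw [this]
    exact dvd_add (hp.mul_right _) ((h i).mul_left _)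

lemma deg_aeval_le (φ : Fin 3 → PP) (h : ∀ i, (φ i).totalDegree ≤ 1) (f : PP) :
    (aeval φ f).totalDegree ≤ f.totalDegree := by
  rw [aeval_def, eval₂_eq]
  refine totalDegree_finsetSum_le ?_
  intro m hm
  refine (totalDegree_mul _ _).trans ?_
  refine le_trans ?_ (le_totalDegree hm)
  rw [algebraMap_eq, totalDegree_C, zero_add]
  refine (totalDegree_finsetProd _ _).trans ?_
  refine Finset.sum_le_sum ?_
  intro i _
  refine (totalDegree_pow _ _).trans ?_
  exact (Nat.mul_le_mul_left _ (h i)).trans (by simp)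

lemma ph_s0 (f : PP) : ph (s0 f) = ph f := by
  have : ph.comp s0 = ph := by
    apply MvPolynomial.algHom_ext
    intro i
    fin_cases i <;> simp
  exact DFunLike.congr_fun this f

lemma ph_deriv (f : PP) : ph (pderiv 1 (s0 f)) = Polynomial.derivative (ph f) + ph (pderiv 1 f) := by
  induction f using MvPolynomial.induction_on with
  | C a => 
    have h1 : s0 (C a) = C a := s0.commutes a
    have h2 : ph (C a) = Polynomial.C a := ph.commutes a
    simp [h1, h2]
  | add p q hp hq => simp only [map_add, hp, hq]; ring
  | mul_X p i hp =>
    simp only [map_mul, Derivation.leibniz, map_add, smul_eq_mul, hp, ph_s0, Polynomial.derivative_mul]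
    fin_cases i <;> simp [pderiv_X] <;> ring

lemma not_dvd_pt {p q : PP} (v : Fin 3 → ZMod 2) (hp : eval v p = 0) (hq : eval v q ≠ 0) :
    ¬ p ∣ q := by
  rintro ⟨r, rfl⟩
  simp [hp] at hq

lemma pr_step {p q g : PP} (hp : Prime p) (hq : ¬ p ∣ q) (h : p ∣ q * g) : p ∣ g :=
  (hp.dvd_or_dvd h).resolve_left hq

noncomputable abbrev d2 : PP := X 0 ^ 2 + X 1 ^ 2 + X 0 * X 1
noncomputable abbrev d3 : PP := X 0 * X 1 * (X 0 + X 1)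
noncomputable abbrev QQ : PP := X 2 * (X 0 + X 1 + X 2) * (X 1 + X 2) * (X 0 + X 2)

def IsInv (f : PP) : Prop := s0 f = f ∧ s1 f = f ∧ s2 f = f

lemma inv_d2 : IsInv d2 := by
  refine ⟨?_, ?_, ?_⟩ <;> simp [d2]
  · linear_combination (X 0 * X 1 + X 1 ^ 2) * two0
  · linear_combination (X 0 * X 1 + X 0 ^ 2) * two0
lemma inv_d3 : IsInv d3 := by
  refine ⟨?_, ?_, ?_⟩ <;> simp [d3]
  · linear_combination ((X 0 + X 1) * X 1 ^ 2 - 0) * two0 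
  · linear_combination ((X 0 + X 1) * X 0 ^ 2) * two0
lemma inv_Q : IsInv QQ := by
  refine ⟨?_, ?_, ?_⟩
  · have e : (X 0 + X 1 + X 1 : PP) = X 0 := by linear_combination (X 1) * two0
    simp only [QQ, map_mul, map_add, s0_0, s0_1, s0_2, s1_0, s1_1, s1_2, e]; ring
  · have e : (X 0 + (X 0 + X 1) : PP) = X 1 := by linear_combination (X 0) * two0
    simp only [QQ, map_mul, map_add, s0_0, s0_1, s0_2, s1_0, s1_1, s1_2, e]; ring
  · have e : (X 0 + X 1 + (X 0 + X 1 + X 2) : PP) = X 2 := by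
      linear_combination (X 0 + X 1) * two0
    have e1 : (X 1 + (X 0 + X 1 + X 2) : PP) = X 0 + X 2 := by
      linear_combination (X 1) * two0
    have e2 : (X 0 + (X 0 + X 1 + X 2) : PP) = X 1 + X 2 := by
      linear_combination (X 0) * two0
    simp only [QQ, map_mul, map_add, s2_0, s2_1, s2_2, e, e1, e2]; ring

lemma IsInv.sub {f g : PP} (hf : IsInv f) (hg : IsInv g) : IsInv (f - g) := by
  obtain ⟨a, b, c⟩ := hf
  obtain ⟨a', b', c'⟩ := hg
  simp [IsInv, *]

lemma IsInv.quot {q g : PP} (hq0 : q ≠ 0) (hq : IsInv q) (h : IsInv (q * g)) : IsInv g := by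
  obtain ⟨a, b, c⟩ := hq
  obtain ⟨a', b', c'⟩ := h
  rw [map_mul, a] at a'
  rw [map_mul, b] at b'
  rw [map_mul, c] at c'
  exact ⟨mul_left_cancel₀ hq0 a', mul_left_cancel₀ hq0 b', mul_left_cancel₀ hq0 c'⟩

def invAlg : Subalgebra (ZMod 2) PP where
  carrier := {f | IsInv f}
  mul_mem' := by
    rintro f g ⟨a, b, c⟩ ⟨a', b', c'⟩
    exact ⟨by simp [*], by simp [*], by simp [*]⟩
  add_mem' := by
    rintro f g ⟨a, b, c⟩ ⟨a', b', c'⟩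
    exact ⟨by simp [*], by simp [*], by simp [*]⟩
  algebraMap_mem' := fun r => ⟨s0.commutes r, s1.commutes r, s2.commutes r⟩

noncomputable abbrev adj : Subalgebra (ZMod 2) PP := Algebra.adjoin (ZMod 2) {d2, d3, QQ}

lemma adj_le : adj ≤ invAlg := by
  refine Algebra.adjoin_le ?_
  rintro f (rfl | rfl | rfl)
  · exact inv_d2
  · exact inv_d3
  · exact inv_Q

lemma pX (i : Fin 3) : Prime (X i : PP) := X_prime

lemma dvd_map_inv {f p : PP} (s : PP →ₐ[ZMod 2] PP) (h : s f = f) (hp : p ∣ f) : s p ∣ f := by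
  have := map_dvd s hp
  rwa [h] at this

lemma d3_dvd {f : PP} (hf : IsInv f) (h : X 1 ∣ f) : d3 ∣ f := by
  have h01 : (X 0 + X 1 : PP) ∣ f := by simpa using dvd_map_inv s1 hf.2.1 h
  have p01 : Prime (X 0 + X 1 : PP) := by simpa using prime_inv s1 s1s1 _ (pX 1)
  have h0 : (X 0 : PP) ∣ f := by
    have := dvd_map_inv s0 hf.1 h01
    have e : (X 0 + X 1 + X 1 : PP) = X 0 := by linear_combination (X 1) * two0
    simpa [e] using this
  obtain ⟨g, rfl⟩ := h
  have h1 := pr_step (pX 0) (not_dvd_pt ![0, 1, 0] (by simp) (by simp)) h0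
  obtain ⟨g, rfl⟩ := h1
  have h2 := pr_step p01 (not_dvd_pt ![1, 1, 0] (by simp; decide) (by simp)) h01
  have h3 := pr_step p01 (not_dvd_pt ![1, 1, 0] (by simp; decide) (by simp)) h2
  obtain ⟨g, rfl⟩ := h3
  exact ⟨g, by simp only [d3]; ring⟩

lemma Q_dvd {f : PP} (hf : IsInv f) (h : X 2 ∣ f) : QQ ∣ f := by
  have e0 : (X 0 + X 1 + X 1 : PP) = X 0 := by linear_combination (X 1) * two0
  have e1 : (X 0 + (X 0 + X 1) : PP) = X 1 := by linear_combination (X 0) * two0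
  have ha : (X 0 + X 1 + X 2 : PP) ∣ f := by simpa using dvd_map_inv s2 hf.2.2 h
  have pa : Prime (X 0 + X 1 + X 2 : PP) := by simpa using prime_inv s2 s2s2 _ (pX 2)
  have hb : (X 0 + X 2 : PP) ∣ f := by simpa [e0] using dvd_map_inv s0 hf.1 ha
  have pb : Prime (X 0 + X 2 : PP) := by simpa [e0] using prime_inv s0 s0s0 _ pa
  have hc : (X 1 + X 2 : PP) ∣ f := by simpa [e1] using dvd_map_inv s1 hf.2.1 ha
  have pc : Prime (X 1 + X 2 : PP) := by simpa [e1] using prime_inv s1 s1s1 _ pa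
  obtain ⟨g, rfl⟩ := h
  have h1 := pr_step pa (not_dvd_pt ![1, 0, 1] (by simp; decide) (by simp)) ha
  obtain ⟨g, rfl⟩ := h1
  have h2 := pr_step pb (not_dvd_pt ![1, 0, 1] (by simp; decide) (by simp)) hb
  have h2 := pr_step pb (not_dvd_pt ![0, 1, 0] (by simp) (by simp)) h2
  obtain ⟨g, rfl⟩ := h2
  have h3 := pr_step pc (not_dvd_pt ![0, 1, 1] (by simp; decide) (by simp)) hc
  have h3 := pr_step pc (not_dvd_pt ![1, 0, 0] (by simp) (by simp)) h3
  have h3 := pr_step pc (not_dvd_pt ![1, 0, 0] (by simp) (by simp)) h3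
  obtain ⟨g, rfl⟩ := h3
  exact ⟨g, by simp only [QQ]; ring⟩

lemma d3_ne : d3 ≠ 0 := by
  have p01 : Prime (X 0 + X 1 : PP) := by simpa using prime_inv s1 s1s1 _ (pX 1)
  exact mul_ne_zero (mul_ne_zero (pX 0).ne_zero (pX 1).ne_zero) p01.ne_zero

lemma Q_ne : QQ ≠ 0 := by
  have e0 : (X 0 + X 1 + X 1 : PP) = X 0 := by linear_combination (X 1) * two0
  have e1 : (X 0 + (X 0 + X 1) : PP) = X 1 := by linear_combination (X 0) * two0
  have pa : Prime (X 0 + X 1 + X 2 : PP) := by simpa using prime_inv s2 s2s2 _ (pX 2)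
  have pb : Prime (X 0 + X 2 : PP) := by simpa [e0] using prime_inv s0 s0s0 _ pa
  have pc : Prime (X 1 + X 2 : PP) := by simpa [e1] using prime_inv s1 s1s1 _ pa
  exact mul_ne_zero (mul_ne_zero (mul_ne_zero (pX 2).ne_zero pa.ne_zero) pc.ne_zero) pb.ne_zero

lemma deg_lt {i : Fin 3} {p g : PP} (hp : X i ∣ p) (hp0 : p ≠ 0) (hg : g ≠ 0) :
    g.totalDegree < (p * g).totalDegree := by
  obtain ⟨r, rfl⟩ := hp
  have hr : r ≠ 0 := right_ne_zero_of_mul hp0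
  rw [mul_assoc, totalDegree_mul_of_isDomain (pX i).ne_zero (mul_ne_zero hr hg),
    totalDegree_mul_of_isDomain hr hg, totalDegree_X]
  omega

lemma totalDegree_aeval_d2 (h : Polynomial (ZMod 2)) :
    (Polynomial.aeval d2 h).totalDegree ≤ h.natDegree * 2 := by
  rw [Polynomial.aeval_eq_sum_range]
  refine totalDegree_finsetSum_le ?_
  intro i hi
  refine (totalDegree_smul_le _ _).trans ((totalDegree_pow _ _).trans ?_)
  have : d2.totalDegree ≤ 2 := by
    refine (totalDegree_add _ _).trans (max_le ((totalDegree_add _ _).trans (max_le ?_ ?_)) ?_)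
    · simp
    · simp
    · exact (totalDegree_mul _ _).trans (by simp)
  have hi' : i ≤ h.natDegree := by simpa [Nat.lt_succ_iff] using hi
  exact Nat.mul_le_mul hi' this

lemma natDegree_ph (f : PP) : (ph f).natDegree ≤ f.totalDegree := by
  have := MvPolynomial.aeval_natDegree_le (n := 1) f le_rfl
    ![Polynomial.X, 0, 0] (by intro i; fin_cases i <;> simp)
  simpa [ph] using this

lemma ph_sq (f : PP) (hf : IsInv f) : ∃ h : Polynomial (ZMod 2),
    ph f = ph (Polynomial.aeval d2 h) ∧ (Polynomial.aeval d2 h).totalDegree ≤ f.totalDegree := by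
  have hd : Polynomial.derivative (ph f) = 0 := by
    have := ph_deriv f
    rw [hf.1] at this
    simpa using this
  haveI : Fact (Nat.Prime 2) := ⟨Nat.prime_two⟩
  have he := Polynomial.expand_contract 2 hd two_ne_zero
  refine ⟨Polynomial.contract 2 (ph f), ?_, ?_⟩
  · conv_lhs => rw [← he]
    rw [← Polynomial.aeval_algHom_apply, Polynomial.expand_eq_comp_X_pow, Polynomial.comp_eq_aeval]
    simp
  · refine (totalDegree_aeval_d2 _).trans ?_
    rw [← Polynomial.natDegree_expand, he]
    exact natDegree_ph f

lemma caseA (n : ℕ) : ∀ f : PP, f.totalDegree < n → IsInv f → zz f = f → f ∈ adj := by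
  induction n with
  | zero => intro f h; omega
  | succ n ih =>
    intro f hn hf hz
    obtain ⟨h, h1, h2⟩ := ph_sq f hf
    set u := Polynomial.aeval d2 h with hu
    have hd2 : d2 ∈ adj := Algebra.subset_adjoin (by simp)
    have hd3 : d3 ∈ adj := Algebra.subset_adjoin (by simp)
    have hua : u ∈ adj := 
      Algebra.adjoin_mono (by simp) (Polynomial.aeval_mem_adjoin_singleton (ZMod 2) d2)
    have hui : IsInv u := adj_le hua
    have huz : zz u = u := by
      rw [hu, ← Polynomial.aeval_algHom_apply]
      congr 1
      simp [d2]
    have hd : X 1 ∣ f - u := by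
      have k := dvd_sub_aeval (d := X 1) (![X 0, 0, X 2] : Fin 3 → PP)
        (by intro i; fin_cases i <;> simp) (f - u)
      have e : ((aeval (![X 0, 0, X 2] : Fin 3 → PP)).comp zz) =
          (Polynomial.aeval (X 0 : PP)).comp ph := by
        apply MvPolynomial.algHom_ext
        intro i
        fin_cases i <;> simp
      have e2 := DFunLike.congr_fun e (f - u)
      simp only [AlgHom.comp_apply, map_sub zz, map_sub ph, hz, huz, h1, sub_self, map_zero] at e2
      rwa [e2, sub_zero] at k
    obtain ⟨g, hg⟩ := d3_dvd (hf.sub hui) hd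
    have hf' : f = d3 * g + u := by rw [← hg]; ring
    by_cases hg0 : g = 0
    · rw [hf', hg0]; simpa using hua
    have hlt := deg_lt (i := 0) (p := d3) (g := g) ⟨X 1 * (X 0 + X 1), by simp only [d3]; ring⟩
      d3_ne hg0
    have hle : (f - u).totalDegree ≤ f.totalDegree :=
      (totalDegree_sub _ _).trans (max_le le_rfl h2)
    rw [hg] at hle
    have hgi : IsInv g := IsInv.quot d3_ne inv_d3 (hg ▸ hf.sub hui)
    have hgz : zz g = g := by
      have := congrArg zz hg
      rw [map_sub, hz, huz, hg, map_mul] at this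
      have e : zz d3 = d3 := by simp [d3]
      rw [e] at this
      exact (mul_left_cancel₀ d3_ne this).symm
    rw [hf']
    exact add_mem (mul_mem hd3 (ih g (by omega) hgi hgz)) hua

lemma caseB (n : ℕ) : ∀ f : PP, f.totalDegree < n → IsInv f → f ∈ adj := by
  induction n with
  | zero => intro f h; omega
  | succ n ih =>
    intro f hn hf
    have hQ : QQ ∈ adj := Algebra.subset_adjoin (by simp)
    have hzz : zz (zz f) = zz f := by
      have : zz.comp zz = zz := by
        apply MvPolynomial.algHom_ext
        intro i
        fin_cases i <;> simp
      exact DFunLike.congr_fun this f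
    have hui : IsInv (zz f) := by
      have a : s0.comp zz = zz.comp s0 := by
        apply MvPolynomial.algHom_ext
        intro i
        fin_cases i <;> simp
      have b : s1.comp zz = zz.comp s1 := by
        apply MvPolynomial.algHom_ext
        intro i
        fin_cases i <;> simp
      have c : s2.comp zz = zz := by
        apply MvPolynomial.algHom_ext
        intro i
        fin_cases i <;> simp
      refine ⟨?_, ?_, DFunLike.congr_fun c f⟩
      · simpa [hf.1] using DFunLike.congr_fun a f
      · simpa [hf.2.1] using DFunLike.congr_fun b f
    have hua : zz f ∈ adj := caseA _ _ (Nat.lt_succ_self _) hui hzz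
    have hd : X 2 ∣ f - zz f := dvd_sub_aeval _ (by intro i; fin_cases i <;> simp) f
    have h2 : (zz f).totalDegree ≤ f.totalDegree :=
      deg_aeval_le _ (by intro i; fin_cases i <;> simp) f
    obtain ⟨g, hg⟩ := Q_dvd (hf.sub hui) hd
    have hf' : f = QQ * g + zz f := by rw [← hg]; ring
    by_cases hg0 : g = 0
    · rw [hf', hg0]; simpa using hua
    have hlt := deg_lt (i := 2) (p := QQ) (g := g)
      ⟨(X 0 + X 1 + X 2) * (X 1 + X 2) * (X 0 + X 2), by simp only [QQ]; ring⟩ Q_ne hg0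
    have hle : (f - zz f).totalDegree ≤ f.totalDegree :=
      (totalDegree_sub _ _).trans (max_le le_rfl h2)
    rw [hg] at hle
    have hgi : IsInv g := IsInv.quot Q_ne inv_Q (hg ▸ hf.sub hui)
    rw [hf']
    exact add_mem (mul_mem hQ (ih g (by omega) hgi)) hua

/-- For the stated Cartan matrix `A`, the subalgebra of `𝔽₂[ω₁,ω₂,ω₃]` of
polynomials fixed by `σ₁`, `σ₂` and `σ₃` is the `𝔽₂`-subalgebra generated by
`ω₁² + ω₂² + ω₁ω₂`, `ω₁ω₂(ω₁+ω₂)` and `ω₃(ω₁+ω₂+ω₃)(ω₂+ω₃)(ω₁+ω₃)`. -/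
theorem mod2_P123_eq_adjoin :
    {q : MvPolynomial (Fin 3) (ZMod 2) |
        cartanSigma Amat (ZMod 2) 0 q = q ∧ cartanSigma Amat (ZMod 2) 1 q = q ∧
          cartanSigma Amat (ZMod 2) 2 q = q} =
      ↑(Algebra.adjoin (ZMod 2)
        ({X 0 ^ 2 + X 1 ^ 2 + X 0 * X 1, X 0 * X 1 * (X 0 + X 1),
          X 2 * (X 0 + X 1 + X 2) * (X 1 + X 2) * (X 0 + X 2)} :
          Set (MvPolynomial (Fin 3) (ZMod 2)))) := by
  rw [hsig0, hsig1, hsig2]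
  ext f
  exact ⟨fun h => caseB _ f (Nat.lt_succ_self _) h, fun h => adj_le h⟩
end

section
/- Let N be a finitely generated free abelian group, M an abelian group, f : M → N a group homomorphism, and p a prime. Then the dimension over F_p of the range of the induced linear map M ⊗_ℤ F_p → N ⊗_ℤ F_p is at most the dimension over ℚ of the range of the induced linear map M ⊗_ℤ ℚ → N ⊗_ℤ ℚ. -/
theorem range_baseChange_eq_range_subtype (K : Type*) [CommRing K] {M N : Type*}
    [AddCommGroup M] [AddCommGroup N] (g : M →ₗ[ℤ] N) :
    LinearMap.range (LinearMap.baseChange K g) =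
      LinearMap.range (LinearMap.baseChange K (LinearMap.range g).subtype) := by
  have h : LinearMap.baseChange K g =
      (LinearMap.baseChange K (LinearMap.range g).subtype).comp
        (LinearMap.baseChange K g.rangeRestrict) := by
    rw [← LinearMap.baseChange_comp]
    rfl
  rw [h]
  apply LinearMap.range_comp_of_range_eq_top
  rw [LinearMap.range_eq_top]
  exact LinearMap.lTensor_surjective K g.surjective_rangeRestrict

/-- Let `N` be a finitely generated free abelian group, `f : M → N` a homomorphism
of abelian groups and `p` a prime.  Then the `𝔽_p`-dimension of the range of the
induced map `M ⊗ 𝔽_p → N ⊗ 𝔽_p` is at most the `ℚ`-dimension of the range of the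
induced map `M ⊗ ℚ → N ⊗ ℚ`. -/
theorem modp_rank_le_rational_rank (M N : Type*)
    [AddCommGroup M] [AddCommGroup N] [Module.Free ℤ N] [Module.Finite ℤ N]
    (f : M →+ N) (p : ℕ) [Fact p.Prime] :
    Module.finrank (ZMod p)
        ↥(LinearMap.range (LinearMap.baseChange (ZMod p) f.toIntLinearMap)) ≤
      Module.finrank ℚ
        ↥(LinearMap.range (LinearMap.baseChange ℚ f.toIntLinearMap)) := by
  rw [range_baseChange_eq_range_subtype (ZMod p), range_baseChange_eq_range_subtype ℚ]
  set I := LinearMap.range f.toIntLinearMap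
  have hinj : Function.Injective (LinearMap.baseChange ℚ I.subtype) :=
    Module.Flat.lTensor_preserves_injective_linearMap (M := ℚ) I.subtype I.injective_subtype
  rw [LinearMap.finrank_range_of_inj hinj]
  refine (LinearMap.finrank_range_le _).trans ?_
  rw [Module.finrank_baseChange, Module.finrank_baseChange]
end
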